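/- arXiv:1709.09869 — 2 statements merged into one kernel-verified Lean document; each statement's English description precedes it below -/
import Mathlib

section
/- Every quadratic polynomial z ↦ z² + c with an irrationally indifferent non-linearizable (Cremer) periodic point has a non-locally-connected Julia set. -/
noncomputable def quadMap (c z : ℂ) : ℂ := z ^ 2 + c

def filledJuliaQuad (c : ℂ) : Set ℂ :=
  {z : ℂ | ∃ B : ℝ, ∀ n : ℕ, ‖(quadMap c)^[n] z‖ ≤ B}

/-- The Julia set of `z ↦ z² + c`, as the boundary of the filled Julia set. -/
def juliaQuad (c : ℂ) : Set ℂ := frontier (filledJuliaQuad c)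

open Set Filter Topology Metric

theorem path_log {S : Set ℂ} {z1 z2 : ℂ} (h : JoinedIn Sᶜ z2 z1) :
    ∃ u : ℂ → ℂ, ContinuousOn u S ∧ ∀ z ∈ S, Complex.exp (u z) * (z - z2) = z - z1 := by
  classical
  set γ := h.somePath
  have hγ : ∀ t, γ t ∉ S := fun t => h.somePath_mem t
  have hne : ∀ (t : unitInterval) (a : S), (a : ℂ) - γ t ≠ 0 := fun t a h0 =>
    hγ t (by rw [sub_eq_zero] at h0; rw [← h0]; exact a.2)
  have h2 : ∀ a : S, (a : ℂ) - z2 ≠ 0 := fun a => by simpa using hne 0 a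
  have cov := Complex.isCoveringMap_exp
  let Hm : C(unitInterval × S, {z : ℂ // z ≠ 0}) :=
    ⟨fun ta => ⟨((ta.2 : ℂ) - γ ta.1) / ((ta.2 : ℂ) - z2), div_ne_zero (hne _ _) (h2 _)⟩, by
      refine Continuous.subtype_mk ?_ _
      refine Continuous.div ?_ ?_ (fun x => h2 _)
      · exact (continuous_subtype_val.comp continuous_snd).sub (γ.continuous.comp continuous_fst)
      · exact (continuous_subtype_val.comp continuous_snd).sub continuous_const⟩
  let f0 : C(S, ℂ) := ContinuousMap.const _ 0
  have H0 : ∀ a, Hm (0, a) = ⟨Complex.exp (f0 a), Complex.exp_ne_zero _⟩ := by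
    intro a
    apply Subtype.ext
    simp [Hm, f0, h2 a]
  let G := cov.liftHomotopy Hm f0 H0
  have hG := cov.liftHomotopy_lifts Hm f0 H0
  refine ⟨fun z => if hz : z ∈ S then G (1, ⟨z, hz⟩) else 0, ?_, ?_⟩
  · rw [continuousOn_iff_continuous_domRestrict]
    have : Continuous fun a : S => G (1, a) := G.continuous.comp (by fun_prop)
    refine this.congr (fun a => ?_)
    simp
  · intro z hz
    have := congrArg Subtype.val (congrFun hG (1, ⟨z, hz⟩))
    simp only [Function.comp, Hm, ContinuousMap.coe_mk, Path.target] at this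
    simp only [hz, dif_pos]
    rw [this, div_mul_cancel₀ _ (h2 ⟨z, hz⟩)]

theorem exp_diff_const {C : Set ℂ} (hC : IsPreconnected C) {u v : ℂ → ℂ} (hu : ContinuousOn u C)
    (hv : ContinuousOn v C) (h : ∀ z ∈ C, Complex.exp (u z) = Complex.exp (v z)) :
    ∃ k : ℂ, Complex.exp k = 1 ∧ ∀ z ∈ C, u z = v z + k := by
  rcases C.eq_empty_or_nonempty with rfl | ⟨a, ha⟩
  · exact ⟨0, by simp, by simp⟩
  have h1 : ∀ z ∈ C, ∃ n : ℤ, u z = v z + n * (2 * Real.pi * Complex.I) := fun z hz =>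
    Complex.exp_eq_exp_iff_exists_int.1 (h z hz)
  let w : ℂ → ℂ := fun z => (u z - v z) / (2 * Real.pi * Complex.I)
  have hw : ContinuousOn w C := (hu.sub hv).div_const _
  have hpi : (2 * Real.pi * Complex.I : ℂ) ≠ 0 := Complex.two_pi_I_ne_zero
  have hwz : ∀ z ∈ C, ∃ n : ℤ, w z = n := fun z hz => by
    obtain ⟨n, hn⟩ := h1 z hz
    exact ⟨n, by simp only [w]; rw [hn]; field_simp; ring⟩
  have hwr : ∀ z ∈ C, w z = w a := by
    have hre : ContinuousOn (fun z => (w z).re) C := Complex.continuous_re.comp_continuousOn hw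
    have hint : ∀ z ∈ C, (w z).re ∈ range ((↑) : ℤ → ℝ) := fun z hz => by
      obtain ⟨n, hn⟩ := hwz z hz
      exact ⟨n, by rw [hn]; simp⟩
    intro z hz
    have : (w z).re = (w a).re := by
      obtain ⟨n, hn⟩ := hint z hz
      obtain ⟨m, hm⟩ := hint a ha
      by_contra hne
      have hnm : n ≠ m := fun h => hne (by rw [← hn, ← hm, h])
      have hpre := (hC.image _ hre).ordConnected
      have hz' : (n : ℝ) ∈ (fun z => (w z).re) '' C := ⟨z, hz, hn.symm⟩
      have ha' : (m : ℝ) ∈ (fun z => (w z).re) '' C := ⟨a, ha, hm.symm⟩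
      have key : ∀ i j : ℤ, (i : ℝ) ∈ (fun z => (w z).re) '' C →
          (j : ℝ) ∈ (fun z => (w z).re) '' C → i < j → False := by
        intro i j hi hj hij
        have hij' : (i : ℝ) + 1 ≤ j := by exact_mod_cast hij
        obtain ⟨y, hy, hy2⟩ := hpre.out hi hj
          (show ((i : ℝ) + 1 / 2) ∈ Icc (i : ℝ) j from ⟨by linarith, by linarith⟩)
        obtain ⟨l, hl⟩ := hint y hy
        simp only at hy2
        rw [← hl] at hy2
        have h3 : (2 * l : ℝ) = 2 * i + 1 := by linarith
        have h4 : 2 * l = 2 * i + 1 := by exact_mod_cast h3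
        omega
      rcases lt_or_gt_of_ne hnm with h | h
      · exact key n m hz' ha' h
      · exact key m n ha' hz' h
    obtain ⟨n, hn⟩ := hwz z hz
    obtain ⟨m, hm⟩ := hwz a ha
    rw [hn, hm] at this ⊢
    simpa using this
  refine ⟨u a - v a, ?_, fun z hz => ?_⟩
  · rw [Complex.exp_sub, h a ha, div_self (Complex.exp_ne_zero _)]
  · have := hwr z hz
    simp only [w] at this
    rw [div_left_inj' hpi] at this
    linear_combination this

theorem convex_simplyConnected {U : Set ℂ} (hU : Convex ℝ U) (hne : U.Nonempty) :
    IsSimplyConnected U := by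
  have : ContractibleSpace U := hU.contractibleSpace hne
  unfold IsSimplyConnected
  infer_instance

theorem no_cont_ext (z1 : ℂ) (R : ℝ) (g : ℂ → ℂ) (hg : Continuous g) (h0 : ∀ z, g z ≠ 0)
    (hR : ∀ z, R ≤ ‖z‖ → g z = z - z1) : False := by
  obtain ⟨u, hu, hue⟩ := Complex.exists_continuousOn_eqOn_exp_comp (U := (univ : Set ℂ))
    (convex_simplyConnected convex_univ univ_nonempty) isOpen_univ hg.continuousOn
    (by rintro ⟨z, -, hz⟩; exact h0 z hz)
  have hu : Continuous u := continuousOn_univ.1 hu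
  have hue : ∀ z, Complex.exp (u z) = g z := fun z => hue (mem_univ z)
  set r : ℝ := |R| + ‖z1‖ + 1
  have hr : 0 < r := by positivity
  let v : ℂ → ℂ := fun t => u (z1 + Complex.exp (Real.log r + t))
  obtain ⟨k, hk, hk2⟩ := exp_diff_const (C := range (fun t : ℝ => (t : ℂ) * Complex.I))
    (isPreconnected_range (by fun_prop)) (u := v) (v := fun t => Real.log r + t)
    (by fun_prop) (by fun_prop) (by
      rintro _ ⟨t, rfl⟩
      simp only [v]
      rw [hue, hR]
      · ring
      · have : ‖Complex.exp (Real.log r + t * Complex.I)‖ = r := by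
          rw [Complex.norm_exp]; simp [Real.exp_log hr]
        have h2 := norm_sub_norm_le (Complex.exp (Real.log r + t * Complex.I)) (-z1)
        rw [this, norm_neg, sub_neg_eq_add, add_comm] at h2
        have := le_abs_self R
        simp only [r] at h2 ⊢
        linarith)
  have a := hk2 (((0 : ℝ) : ℂ) * Complex.I) ⟨0, rfl⟩
  have b := hk2 (((2 * Real.pi : ℝ) : ℂ) * Complex.I) ⟨_, rfl⟩
  have hv : v (((0 : ℝ) : ℂ) * Complex.I) = v (((2 * Real.pi : ℝ) : ℂ) * Complex.I) := by
    simp only [v]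
    congr 2
    rw [Complex.exp_add, Complex.exp_add]
    push_cast
    rw [Complex.exp_two_pi_mul_I]; simp
  rw [a, b] at hv
  simp [Real.pi_ne_zero] at hv

theorem holo_log {U : Set ℂ} (hU : Convex ℝ U) (hUo : IsOpen U) (hne : U.Nonempty) {g : ℂ → ℂ}
    (hg : DifferentiableOn ℂ g U) (h0 : ∀ z ∈ U, g z ≠ 0) :
    ∃ u : ℂ → ℂ, DifferentiableOn ℂ u U ∧ ∀ z ∈ U, Complex.exp (u z) = g z := by
  obtain ⟨u, hu, hue⟩ := Complex.exists_continuousOn_eqOn_exp_comp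
    (convex_simplyConnected hU hne) hUo hg.continuousOn
    (by rintro ⟨z, hz, hz0⟩; exact h0 z hz hz0)
  refine ⟨u, fun z hz => ?_, fun z hz => hue hz⟩
  apply DifferentiableAt.differentiableWithinAt
  have hUz := hUo.mem_nhds hz
  have hcu : ContinuousAt u z := hu.continuousAt hUz
  have hev : ∀ᶠ w in 𝓝 z, u w = u z + Complex.log (g w / g z) := by
    have h1 : ∀ᶠ w in 𝓝 z, dist (u w) (u z) < 1 := hcu (ball_mem_nhds _ one_pos)
    filter_upwards [h1, hUz] with w hw hwU
    rw [← hue hwU, ← hue hz]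
    simp only [Function.comp]
    have h2 : |(u w - u z).im| < 1 := lt_of_le_of_lt (Complex.abs_im_le_norm _)
      (by rwa [dist_eq_norm] at hw)
    have := Real.pi_gt_three
    rw [abs_lt] at h2
    rw [← Complex.exp_sub, Complex.log_exp (by linarith) (by linarith)]
    ring
  have hgz : DifferentiableAt ℂ g z := hg.differentiableAt hUz
  have : DifferentiableAt ℂ (fun w => u z + Complex.log (g w / g z)) z := by
    refine (DifferentiableAt.clog (hgz.div_const _) ?_).const_add _
    rw [div_self (h0 z hz)]; exact Complex.one_mem_slitPlane
  exact this.congr_of_eventuallyEq hev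

theorem bloch {g : ℂ → ℂ} {z0 : ℂ} {r : ℝ} (hr : 0 < r)
    (hg : DifferentiableOn ℂ g (ball z0 r)) :
    ∃ z ∈ ball z0 r, ball (g z) (r * ‖deriv g z0‖ / 128) ⊆ g '' ball z0 r := by
  by_cases hd0 : deriv g z0 = 0
  · refine ⟨z0, mem_ball_self hr, ?_⟩
    simp [hd0]
  have hdg : DifferentiableOn ℂ (deriv g) (ball z0 r) := hg.deriv isOpen_ball
  have hsub : closedBall z0 (r / 2) ⊆ ball z0 r := closedBall_subset_ball (by linarith)
  obtain ⟨z, hz, hmax⟩ := (isCompact_closedBall z0 (r / 2)).exists_isMaxOn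
    ⟨z0, mem_closedBall_self (by linarith)⟩
    (f := fun z => ‖deriv g z‖ * (r / 2 - dist z z0))
    ((hdg.continuousOn.mono hsub).norm.mul (by fun_prop))
  have hmax : ∀ w ∈ closedBall z0 (r / 2), ‖deriv g w‖ * (r / 2 - dist w z0) ≤
    ‖deriv g z‖ * (r / 2 - dist z z0) := hmax
  have h1 := hmax z0 (mem_closedBall_self (by linarith))
  rw [dist_self, sub_zero] at h1
  have hpos : 0 < ‖deriv g z0‖ := norm_pos_iff.2 hd0
  have hzd : dist z z0 ≤ r / 2 := hz
  set D := r / 2 - dist z z0 with hD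
  have hDpos : 0 < D := by
    rcases (sub_nonneg.2 hzd).lt_or_eq with h | h
    · exact h
    · rw [← hD] at h; rw [← h] at h1; nlinarith
  set a := deriv g z with ha
  have hapos : 0 < ‖a‖ := by
    by_contra h
    have : ‖a‖ = 0 := le_antisymm (not_lt.1 h) (norm_nonneg _)
    rw [this] at h1; nlinarith
  have hballs : ball z (D / 2) ⊆ closedBall z0 (r / 2) := by
    intro w hw
    rw [mem_ball] at hw
    rw [mem_closedBall]
    linarith [dist_triangle w z z0]
  have h2 : ∀ w ∈ ball z (D / 2), ‖deriv g w‖ ≤ 2 * ‖a‖ := by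
    intro w hw
    have := hmax w (hballs hw)
    rw [mem_ball] at hw
    have h3 : D / 2 ≤ r / 2 - dist w z0 := by linarith [dist_triangle w z z0]
    have h4 : ‖deriv g w‖ * (D / 2) ≤ ‖a‖ * D :=
      (mul_le_mul_of_nonneg_left h3 (norm_nonneg _)).trans this
    nlinarith
  have hz' : z ∈ ball z (D / 2) := mem_ball_self (by linarith)
  have hbr : ball z (D / 2) ⊆ ball z0 r := hballs.trans hsub
  have h3 : ∀ w ∈ ball z (D / 2), ‖deriv g w - a‖ ≤ 4 * ‖a‖ / (D / 2) * dist w z := by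
    intro w hw
    have := Complex.dist_le_div_mul_dist_of_mapsTo_ball (f := deriv g) (c := z) (R₁ := D / 2)
      (R₂ := 4 * ‖a‖) (hdg.mono hbr) (fun v hv => by
        rw [mem_closedBall, dist_eq_norm]
        have := norm_sub_le (deriv g v) a
        have := h2 v hv
        change ‖deriv g v - a‖ ≤ _
        linarith) hw
    rw [dist_eq_norm] at this
    exact this
  set ρ := D / 16 with hρ
  have hρp : 0 < ρ := by positivity
  have hcb : closedBall z ρ ⊆ ball z (D / 2) := closedBall_subset_ball (by simp only [ρ]; linarith)
  have h4 : ∀ w ∈ closedBall z ρ, ‖deriv g w - a‖ ≤ ‖a‖ / 2 := by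
    intro w hw
    refine (h3 w (hcb hw)).trans ?_
    have : dist w z ≤ D / 16 := hw
    calc 4 * ‖a‖ / (D / 2) * dist w z ≤ 4 * ‖a‖ / (D / 2) * (D / 16) := by gcongr
      _ = ‖a‖ / 2 := by field_simp; norm_num
  have h5 : ∀ w ∈ closedBall z ρ, ‖(g w - a * w) - (g z - a * z)‖ ≤ ‖a‖ / 2 * ‖w - z‖ := by
    intro w hw
    refine (convex_closedBall z ρ).norm_image_sub_le_of_norm_hasDerivWithin_le
      (f := fun w => g w - a * w) (f' := fun w => deriv g w - a) (fun v hv => ?_) h4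
      (mem_closedBall_self hρp.le) hw
    have hd : HasDerivAt g (deriv g v) v :=
      (hg.differentiableAt (isOpen_ball.mem_nhds (hbr (hcb hv)))).hasDerivAt
    have := hd.sub ((hasDerivAt_id v).const_mul a)
    rw [mul_one] at this
    exact this.hasDerivWithinAt
  have h6 : ∀ w ∈ closedBall z ρ, ‖a‖ / 2 * ‖w - z‖ ≤ ‖g w - g z‖ := by
    intro w hw
    have e : g w - g z = a * (w - z) + ((g w - a * w) - (g z - a * z)) := by ring
    have := norm_sub_le_norm_add (a * (w - z)) ((g w - a * w) - (g z - a * z))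
    rw [← e, norm_mul] at this
    linarith [h5 w hw]
  have h7 := DiffContOnCl.ball_subset_image_closedBall (f := g) (z₀ := z) (r := ρ)
    (ε := ‖a‖ / 2 * ρ) ?_ hρp ?_ ?_
  · refine ⟨z, hbr hz', ?_⟩
    refine (ball_subset_ball ?_).trans (h7.trans (image_mono (hcb.trans hbr)))
    have : ‖a‖ / 2 * ρ / 2 = ‖a‖ * D / 64 := by simp only [ρ]; ring
    rw [this]
    nlinarith
  · refine (hg.mono (hcb.trans hbr)).diffContOnCl_ball (le_refl _) 
  · intro w hw
    have := h6 w (sphere_subset_closedBall hw)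
    rwa [← dist_eq_norm w z, mem_sphere.1 hw] at this
  · have : ∀ᶠ w in 𝓝[≠] z, g w ≠ g z := by
      rw [eventually_nhdsWithin_iff]
      filter_upwards [closedBall_mem_nhds z hρp] with w hw hwz heq
      have := h6 w hw
      rw [heq, sub_self, norm_zero] at this
      have : 0 < ‖w - z‖ := norm_pos_iff.2 (sub_ne_zero.2 hwz)
      nlinarith
    exact this.frequently.filter_mono nhdsWithin_le_nhds

theorem taylor_two {g : ℂ → ℂ} {z : ℂ} {ρ B : ℝ} (hρ : 0 < ρ) 
    (hg : DifferentiableOn ℂ g (ball z ρ)) (hB : ∀ w ∈ ball z ρ, ‖g w‖ ≤ B) :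
    ‖deriv g z‖ ≤ 2 * B / ρ ∧
    ∀ w ∈ ball z ρ, ‖g w - g z - deriv g z * (w - z)‖ ≤ (4 * B / ρ ^ 2) * ‖w - z‖ ^ 2 := by
  have hz : z ∈ ball z ρ := mem_ball_self hρ
  have hm : MapsTo g (ball z ρ) (closedBall (g z) (2 * B)) := fun w hw => by
    rw [mem_closedBall, dist_eq_norm]
    linarith [norm_sub_le (g w) (g z), hB w hw, hB z hz]
  have h1 : ∀ w ∈ ball z ρ, ‖dslope g z w‖ ≤ 2 * B / ρ := fun w hw =>
    Complex.norm_dslope_le_div_of_mapsTo_ball hg hm hw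
  have h2 : DifferentiableOn ℂ (dslope g z) (ball z ρ) :=
    (Complex.differentiableOn_dslope (isOpen_ball.mem_nhds hz)).2 hg
  have hd : dslope g z z = deriv g z := dslope_same g z
  refine ⟨hd ▸ h1 z hz, fun w hw => ?_⟩
  have h3 := Complex.dist_le_div_mul_dist_of_mapsTo_ball (R₂ := 4 * B / ρ) h2 (fun v hv => by
    rw [mem_closedBall, dist_eq_norm]
    have := norm_sub_le (dslope g z v) (dslope g z z)
    have := h1 v hv
    have := h1 z hz
    have e : 4 * B / ρ = 2 * B / ρ + 2 * B / ρ := by ring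
    linarith) hw
  rw [hd, dist_eq_norm, dist_eq_norm] at h3
  have e : g w - g z - deriv g z * (w - z) = (w - z) * (dslope g z w - deriv g z) := by
    have := sub_smul_dslope g z w
    rw [smul_eq_mul] at this
    linear_combination -this
  rw [e, norm_mul]
  calc ‖w - z‖ * ‖dslope g z w - deriv g z‖ ≤ ‖w - z‖ * (4 * B / ρ / ρ * ‖w - z‖) := by gcongr
    _ = _ := by field_simp

theorem ultra_lim {U : Ultrafilter ℕ} {a : ℕ → ℂ} {B : ℝ} (h : ∀ n, ‖a n‖ ≤ B) :
    ∃ l, Tendsto a U (𝓝 l) := by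
  obtain ⟨l, -, hl⟩ := (isCompact_closedBall (0:ℂ) B).ultrafilter_le_nhds (U.map a) (by
    rw [le_principal_iff]
    exact mem_map.2 (Eventually.of_forall (f := (U : Filter ℕ)) (fun n => by simpa using h n)))
  exact ⟨l, hl⟩

theorem siegel_lin {F : ℂ → ℂ} {p l : ℂ} {U : Set ℂ} {R : ℝ} (hF : Differentiable ℂ F)
    (hp : F p = p) (hl : deriv F p = l) (hl1 : ‖l‖ = 1) (hU : IsOpen U) (hpU : p ∈ U)
    (hm : MapsTo F U U) (hR : ∀ z ∈ U, ‖z‖ ≤ R) :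
    ∃ (r : ℝ) (h : ℂ → ℂ), 0 < r ∧ h 0 = p ∧ DifferentiableOn ℂ h (ball (0 : ℂ) r) ∧
        InjOn h (ball (0 : ℂ) r) ∧
        ∀ w ∈ ball (0 : ℂ) r, ‖l * w‖ < r → F (h w) = h (l * w) := by
  have hl0 : l ≠ 0 := by rw [← norm_pos_iff, hl1]; norm_num
  have hFk : ∀ k, Differentiable ℂ (F^[k]) := fun k => hF.iterate k
  have hFp : ∀ k, F^[k] p = p := fun k => Function.iterate_fixed hp k
  have hder : ∀ k, deriv (F^[k]) p = l ^ k := by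
    intro k
    have := HasDerivAt.iterate p (hl ▸ (hF p).hasDerivAt) hp k
    exact this.deriv
  have hR0 : 0 ≤ R := (norm_nonneg p).trans (hR p hpU)
  have hmk : ∀ k, MapsTo (F^[k]) U U := fun k => hm.iterate k
  let A : ℕ → ℂ → ℂ := fun M z => ((M:ℂ) + 1)⁻¹ * ∑ k ∈ Finset.range (M + 1), (l⁻¹) ^ k * (F^[k] z - p)
  have hAd : ∀ M, Differentiable ℂ (A M) := by
    intro M
    refine Differentiable.const_mul ?_ _
    refine Differentiable.fun_sum fun k _ => ?_
    exact ((hFk k).sub_const p).const_mul _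
  have hM : ∀ M : ℕ, ‖((M:ℂ) + 1)⁻¹‖ = ((M:ℝ) + 1)⁻¹ := by
    intro M
    rw [norm_inv]; norm_cast
  have hli : ∀ k, ‖(l⁻¹) ^ k‖ = 1 := by intro k; simp [hl1]
  have hAb : ∀ M, ∀ z ∈ U, ‖A M z‖ ≤ 2 * R := by
    intro M z hz
    simp only [A]
    rw [norm_mul, hM]
    have : ‖∑ k ∈ Finset.range (M + 1), (l⁻¹) ^ k * (F^[k] z - p)‖ ≤ (M + 1) * (2 * R) := by
      refine (norm_sum_le_of_le (n := fun _ => 2 * R) _ fun k _ => ?_).trans ?_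
      · rw [norm_mul, hli, one_mul]
        linarith [norm_sub_le (F^[k] z) p, hR _ (hmk k hz), hR p hpU]
      · simp
    have hpos : (0:ℝ) < M + 1 := by positivity
    calc _ ≤ ((M:ℝ) + 1)⁻¹ * ((M + 1) * (2 * R)) := by gcongr
      _ = _ := by field_simp
  have hAder : ∀ M, deriv (A M) p = 1 := by
    intro M
    have : HasDerivAt (A M) (((M:ℂ) + 1)⁻¹ * ∑ k ∈ Finset.range (M + 1), (l⁻¹) ^ k * l ^ k) p := by
      refine HasDerivAt.const_mul _ ?_
      refine HasDerivAt.fun_sum fun k _ => ?_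
      refine HasDerivAt.const_mul _ ?_
      rw [← hder k]
      exact ((hFk k) p).hasDerivAt.sub_const p
    rw [this.deriv]
    have e : ∀ k ∈ Finset.range (M + 1), (l⁻¹) ^ k * l ^ k = 1 := by
      intro k _; rw [← mul_pow, inv_mul_cancel₀ hl0, one_pow]
    rw [Finset.sum_congr rfl e]
    have : (M:ℂ) + 1 ≠ 0 := by exact_mod_cast Nat.succ_ne_zero M
    simp [this]
  have hAF : ∀ M, ∀ z ∈ U, ‖A M (F z) - l * A M z‖ ≤ ((M:ℝ) + 1)⁻¹ * (4 * R) := by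
    intro M z hz
    have e : A M (F z) - l * A M z = ((M:ℂ) + 1)⁻¹ *
        (l * ((l⁻¹) ^ (M + 1) * (F^[M + 1] z - p) - (z - p))) := by
      simp only [A]
      rw [mul_left_comm, ← mul_sub]
      congr 1
      have e1 : ∑ k ∈ Finset.range (M + 1), (l⁻¹) ^ k * (F^[k] (F z) - p) =
          l * ∑ k ∈ Finset.range (M + 1), (l⁻¹) ^ (k + 1) * (F^[k + 1] z - p) := by
        rw [Finset.mul_sum]
        refine Finset.sum_congr rfl fun k _ => ?_
        rw [Function.iterate_succ_apply, pow_succ]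
        field_simp
      rw [e1, ← mul_sub, ← Finset.sum_sub_distrib,
        Finset.sum_range_sub (fun k => (l⁻¹) ^ k * (F^[k] z - p))]
      simp
    rw [e, norm_mul, hM]
    gcongr
    rw [norm_mul, hl1, one_mul]
    have a1 := norm_sub_le ((l⁻¹) ^ (M + 1) * (F^[M + 1] z - p)) (z - p)
    rw [norm_mul, hli, one_mul] at a1
    linarith [norm_sub_le (F^[M + 1] z) p, norm_sub_le z p, hR _ (hmk (M+1) hz), hR p hpU, hR z hz]
  let W : Ultrafilter ℕ := Ultrafilter.of atTop
  have hW : (W : Filter ℕ) ≤ atTop := Ultrafilter.of_le _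
  have hlim : ∀ z, ∃ a, z ∈ U → Tendsto (fun M => A M z) W (𝓝 a) := by
    intro z
    by_cases hz : z ∈ U
    · obtain ⟨a, ha⟩ := ultra_lim (U := W) (fun M => hAb M z hz)
      exact ⟨a, fun _ => ha⟩
    · exact ⟨0, fun h => absurd h hz⟩
  choose φ hφ using hlim
  have hφF : ∀ z ∈ U, φ (F z) = l * φ z := by
    intro z hz
    have h1 := (hφ (F z) (hm hz)).sub ((hφ z hz).const_mul l)
    have h2 : Tendsto (fun M => A M (F z) - l * A M z) W (𝓝 0) := by
      refine squeeze_zero_norm (fun M => hAF M z hz) ?_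
      have : Tendsto (fun M : ℕ => ((M:ℝ) + 1)⁻¹ * (4 * R)) atTop (𝓝 (0 * (4 * R))) :=
        (tendsto_inv_atTop_zero.comp
          (tendsto_atTop_add_const_right _ _ tendsto_natCast_atTop_atTop)).mul_const _
      rw [zero_mul] at this
      exact this.mono_left hW
    exact sub_eq_zero.1 (tendsto_nhds_unique h1 h2)
  have hφp : φ p = 0 := by
    refine tendsto_nhds_unique (hφ p hpU) ?_
    have : (fun M => A M p) = fun _ => 0 := by
      funext M; simp [A, hFp]
    rw [this]; exact tendsto_const_nhds
  have hφd : ∀ z ∈ U, ∃ d, HasDerivAt φ d z ∧ Tendsto (fun M => deriv (A M) z) W (𝓝 d) := by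
    intro z hz
    obtain ⟨ρ, hρ, hball⟩ := Metric.isOpen_iff.1 hU z hz
    have hT := fun M => taylor_two hρ (hAd M).differentiableOn (fun w hw => hAb M w (hball hw))
    obtain ⟨d, hd⟩ := ultra_lim (U := W) (fun M => (hT M).1)
    refine ⟨d, ?_, hd⟩
    have hb : ∀ w ∈ ball z ρ, ‖φ w - φ z - d * (w - z)‖ ≤ (4 * (2 * R) / ρ ^ 2) * ‖w - z‖ ^ 2 := by
      intro w hw
      have := (((hφ w (hball hw)).sub (hφ z hz)).sub (hd.mul_const (w - z))).norm
      exact le_of_tendsto this (Eventually.of_forall fun M => (hT M).2 w hw)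
    rw [hasDerivAt_iff_isLittleO]
    have h1 : (fun w => φ w - φ z - (w - z) • d) =O[𝓝 z] fun w => ‖w - z‖ ^ 2 := by
      refine Asymptotics.IsBigO.of_bound (4 * (2 * R) / ρ ^ 2) ?_
      filter_upwards [ball_mem_nhds z hρ] with w hw
      have := hb w hw
      rw [smul_eq_mul, mul_comm (w - z) d]
      simpa using this
    refine h1.trans_isLittleO ?_
    have h2 : (fun w : ℂ => w - z) =o[𝓝 z] fun w => (1:ℝ) := by
      rw [Asymptotics.isLittleO_one_iff]
      have : Tendsto (fun w : ℂ => w - z) (𝓝 z) (𝓝 (z - z)) := by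
        exact (continuous_id.sub continuous_const).tendsto z
      simpa using this
    have h3 := h2.norm_left.mul_isBigO (Asymptotics.isBigO_refl (fun w : ℂ => ‖w - z‖) (𝓝 z))
    refine Asymptotics.IsLittleO.of_norm_right ?_
    simpa [pow_two] using h3
  have hφdp : deriv φ p = 1 := by
    obtain ⟨d, h1, h2⟩ := hφd p hpU
    rw [h1.deriv]
    refine tendsto_nhds_unique h2 ?_
    simp only [hAder]; exact tendsto_const_nhds
  have hφdiff : DifferentiableOn ℂ φ U := fun z hz =>
    (hφd z hz).choose_spec.1.differentiableAt.differentiableWithinAt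
  have hφa : AnalyticAt ℂ φ p := hφdiff.analyticAt (hU.mem_nhds hpU)
  have hs : HasStrictDerivAt φ 1 p := by
    have := hφa.hasStrictDerivAt
    rwa [hφdp] at this
  let e := (hs.hasStrictFDerivAt_equiv one_ne_zero).toOpenPartialHomeomorph φ
  have hec : (e : ℂ → ℂ) = φ := rfl
  have hpe : p ∈ e.source := (hs.hasStrictFDerivAt_equiv one_ne_zero).mem_toOpenPartialHomeomorph_source
  have h0e : (0:ℂ) ∈ e.target := by
    have := e.map_source hpe
    rwa [hec, hφp] at this
  have hs0 : e.symm 0 = p := by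
    have := e.left_inv hpe
    rwa [hec, hφp] at this
  have hcont : ContinuousAt e.symm 0 := e.continuousAt_symm h0e
  have ev1 : ∀ᶠ w in 𝓝 (0:ℂ), w ∈ e.target := e.open_target.mem_nhds h0e
  have hd1 : ∀ᶠ z in 𝓝 p, deriv φ z ≠ 0 := by
    have : ContinuousAt (deriv φ) p := hφa.deriv.continuousAt
    exact this.eventually_ne (by rw [hφdp]; exact one_ne_zero)
  have hcont' : Tendsto e.symm (𝓝 0) (𝓝 p) := by have := hcont.tendsto; rwa [hs0] at this
  have ev2 : ∀ᶠ w in 𝓝 (0:ℂ), deriv φ (e.symm w) ≠ 0 ∧ e.symm w ∈ U :=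
    (hcont'.eventually hd1).and (hcont'.eventually (hU.mem_nhds hpU))
  have ev3 : ∀ᶠ w in 𝓝 (0:ℂ), F (e.symm w) ∈ e.source := by
    have : Tendsto F (𝓝 p) (𝓝 p) := by
      have := hF.continuous.tendsto p; rwa [hp] at this
    exact (this.comp hcont').eventually (e.open_source.mem_nhds hpe)
  obtain ⟨r, hr, hball⟩ := Metric.eventually_nhds_iff_ball.1 (ev1.and (ev2.and ev3))
  refine ⟨r, e.symm, hr, hs0, ?_, ?_, ?_⟩
  · intro w hw
    obtain ⟨h1, ⟨h2, h3⟩, -⟩ := hball w hw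
    have : HasDerivAt e (deriv φ (e.symm w)) (e.symm w) := by
      rw [hec]; exact (hφdiff.differentiableAt (hU.mem_nhds h3)).hasDerivAt
    exact (e.hasDerivAt_symm h1 h2 this).differentiableAt.differentiableWithinAt
  · exact e.symm.injOn.mono fun w hw => (hball w hw).1
  · intro w hw _
    obtain ⟨h1, ⟨h2, h3⟩, h4⟩ := hball w hw
    have h5 := e.left_inv h4
    have h6 := e.right_inv h1
    rw [hec] at h5 h6
    rw [hφF _ h3, h6] at h5
    exact h5.symm

theorem qm_esc {c z : ℂ} (h : ‖c‖ + 3 ≤ ‖z‖) : 2 * ‖z‖ ≤ ‖quadMap c z‖ := by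
  have h1 : ‖z ^ 2‖ - ‖c‖ ≤ ‖z ^ 2 + c‖ := norm_sub_le_norm_add _ _
  rw [norm_pow] at h1
  unfold quadMap
  nlinarith [norm_nonneg c, norm_nonneg z]

theorem qm_esc_iter {c z : ℂ} (h : ‖c‖ + 3 ≤ ‖z‖) (k : ℕ) :
    2 ^ k * ‖z‖ ≤ ‖(quadMap c)^[k] z‖ := by
  induction k with
  | zero => simp
  | succ k ih =>
    rw [Function.iterate_succ_apply']
    have h1 : ‖z‖ ≤ 2 ^ k * ‖z‖ := le_mul_of_one_le_left (norm_nonneg _) (one_le_pow₀ (by norm_num))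
    have := qm_esc (c := c) (h.trans (h1.trans ih))
    rw [pow_succ]; linarith

theorem K_lt {c z : ℂ} (h : z ∈ filledJuliaQuad c) : ‖z‖ < ‖c‖ + 3 := by
  by_contra hc
  push Not at hc
  obtain ⟨B, hB⟩ := h
  have hz : 1 ≤ ‖z‖ := by linarith [norm_nonneg c]
  obtain ⟨k, hk⟩ := pow_unbounded_of_one_lt B (one_lt_two (α := ℝ))
  have := qm_esc_iter hc k
  have := hB k
  nlinarith [pow_pos (two_pos (α := ℝ)) k]

theorem K_inv {c z : ℂ} : quadMap c z ∈ filledJuliaQuad c ↔ z ∈ filledJuliaQuad c := by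
  constructor
  · rintro ⟨B, hB⟩
    refine ⟨max B ‖z‖, fun n => ?_⟩
    cases n with
    | zero => simp
    | succ n => exact (hB n).trans (le_max_left _ _)
  · rintro ⟨B, hB⟩
    exact ⟨B, fun n => hB (n + 1)⟩

theorem K_inv_iter {c z : ℂ} (k : ℕ) :
    (quadMap c)^[k] z ∈ filledJuliaQuad c ↔ z ∈ filledJuliaQuad c := by
  induction k generalizing z with
  | zero => rfl
  | succ k ih => rw [Function.iterate_succ_apply, ih, K_inv]

theorem qm_diff (c : ℂ) : Differentiable ℂ (quadMap c) := by
  unfold quadMap; fun_prop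

theorem qm_cont (c : ℂ) : Continuous (quadMap c) := (qm_diff c).continuous

theorem K_eq (c : ℂ) : filledJuliaQuad c = ⋂ n : ℕ, {z | ‖(quadMap c)^[n] z‖ ≤ ‖c‖ + 3} := by
  ext z
  simp only [mem_iInter, mem_ofPred_eq]
  constructor
  · intro h n
    exact (K_lt ((K_inv_iter n).2 h)).le
  · intro h
    exact ⟨_, h⟩

theorem K_closed (c : ℂ) : IsClosed (filledJuliaQuad c) := by
  rw [K_eq]
  exact isClosed_iInter fun n => isClosed_le ((qm_cont c).iterate n).norm continuous_const

theorem K_compact (c : ℂ) : IsCompact (filledJuliaQuad c) := by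
  refine (isCompact_closedBall (0:ℂ) (‖c‖ + 3)).of_isClosed_subset (K_closed c) fun z hz => ?_
  simpa using (K_lt hz).le

theorem J_sub_K (c : ℂ) : juliaQuad c ⊆ filledJuliaQuad c := (K_closed c).frontier_subset

theorem J_compact (c : ℂ) : IsCompact (juliaQuad c) :=
  (K_compact c).of_isClosed_subset isClosed_frontier (J_sub_K c)

theorem qm_open (c : ℂ) : IsOpenMap (quadMap c) := by
  have : AnalyticOnNhd ℂ (quadMap c) univ := (qm_diff c).differentiableOn.analyticOnNhd isOpen_univ
  rcases this.is_constant_or_isOpen isPreconnected_univ with ⟨w, hw⟩ | h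
  · have h1 := hw 0 (mem_univ _)
    have h2 := hw 1 (mem_univ _)
    simp [quadMap] at h1 h2
    rw [h1] at h2; simp at h2
  · exact fun s hs => h s (subset_univ _) hs

theorem qm_open_iter (c : ℂ) (n : ℕ) : IsOpenMap ((quadMap c)^[n]) := by
  induction n with
  | zero => exact IsOpenMap.id
  | succ n ih => rw [Function.iterate_succ]; exact ih.comp (qm_open c)

theorem J_inv {c z : ℂ} : quadMap c z ∈ juliaQuad c ↔ z ∈ juliaQuad c := by
  have := (qm_open c).preimage_frontier_eq_frontier_preimage (qm_cont c) (filledJuliaQuad c)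
  have e : quadMap c ⁻¹' filledJuliaQuad c = filledJuliaQuad c := by ext; exact K_inv
  rw [e] at this
  exact Set.ext_iff.1 this z

theorem J_inv_iter {c z : ℂ} (k : ℕ) :
    (quadMap c)^[k] z ∈ juliaQuad c ↔ z ∈ juliaQuad c := by
  induction k generalizing z with
  | zero => rfl
  | succ k ih => rw [Function.iterate_succ_apply, ih, J_inv]

theorem per_mem_K {c p : ℂ} {n : ℕ} (hn : 0 < n) (hper : (quadMap c)^[n] p = p) :
    p ∈ filledJuliaQuad c := by
  have hP : Function.IsPeriodicPt (quadMap c) n p := hper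
  have hfin : (range fun k : Fin n => ‖(quadMap c)^[k] p‖).Finite := finite_range _
  obtain ⟨B, hB⟩ := hfin.bddAbove
  refine ⟨B, fun k => ?_⟩
  rw [← hP.iterate_mod_apply k]
  exact hB ⟨⟨k % n, Nat.mod_lt _ hn⟩, rfl⟩

theorem per_mem_J {c p : ℂ} {n : ℕ} (hn : 0 < n)
    (hper : (quadMap c)^[n] p = p)
    (hind : ‖deriv ((quadMap c)^[n]) p‖ = 1)
    (hnonlin : ¬ ∃ (r : ℝ) (h : ℂ → ℂ), 0 < r ∧
        h 0 = p ∧ DifferentiableOn ℂ h (Metric.ball (0 : ℂ) r) ∧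
        Set.InjOn h (Metric.ball (0 : ℂ) r) ∧
        ∀ w ∈ Metric.ball (0 : ℂ) r,
          ‖deriv ((quadMap c)^[n]) p * w‖ < r →
            (quadMap c)^[n] (h w) = h (deriv ((quadMap c)^[n]) p * w)) :
    p ∈ juliaQuad c := by
  by_contra hJ
  have hK := per_mem_K hn hper
  have hint : p ∈ interior (filledJuliaQuad c) := by
    by_contra h
    exact hJ ⟨subset_closure hK, h⟩
  apply hnonlin
  refine siegel_lin (U := interior (filledJuliaQuad c)) (R := ‖c‖ + 3) ((qm_diff c).iterate n) hper rfl hind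
    isOpen_interior hint ?_ (fun z hz => (K_lt (interior_subset hz)).le)
  intro z hz
  have hop : IsOpenMap ((quadMap c)^[n]) := qm_open_iter c n
  have : IsOpen ((quadMap c)^[n] '' interior (filledJuliaQuad c)) := hop _ isOpen_interior
  refine interior_maximal ?_ this (mem_image_of_mem _ hz)
  rintro _ ⟨w, hw, rfl⟩
  exact (K_inv_iter n).2 (interior_subset hw)

theorem range_fin {X : Type*} [TopologicalSpace X] [CompactSpace X] [LocallyConnectedSpace X]
    {e : X → (ℕ → Bool)} (he : Continuous e) : (range e).Finite := by
  have : IsLocallyConstant e := by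
    rw [IsLocallyConstant.iff_exists_open]
    intro x
    refine ⟨connectedComponent x, isOpen_connectedComponent, mem_connectedComponent, fun y hy => ?_⟩
    have h1 : IsPreconnected (e '' connectedComponent x) :=
      isPreconnected_connectedComponent.image _ he.continuousOn
    exact h1.subsingleton (mem_image_of_mem _ hy) (mem_image_of_mem _ mem_connectedComponent)
  exact this.range_finite

theorem omega_far {c z : ℂ} (hz : z ∉ filledJuliaQuad c) (R : ℝ) :
    ∃ w, R < ‖w‖ ∧ JoinedIn (filledJuliaQuad c)ᶜ z w := by
  have hO : IsOpen (filledJuliaQuad c)ᶜ := (K_closed c).isOpen_compl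
  set C := connectedComponentIn (filledJuliaQuad c)ᶜ z with hC
  have hCo : IsOpen C := hO.connectedComponentIn
  have hzC : z ∈ C := mem_connectedComponentIn hz
  have hCsub : C ⊆ (filledJuliaQuad c)ᶜ := connectedComponentIn_subset _ _
  have hCc : IsConnected C := isConnected_connectedComponentIn_iff.2 hz
  have hfr : frontier C ⊆ filledJuliaQuad c := by
    intro w hw
    by_contra hwO
    have h1 : IsOpen (connectedComponentIn (filledJuliaQuad c)ᶜ w) := hO.connectedComponentIn
    have h2 : w ∈ connectedComponentIn (filledJuliaQuad c)ᶜ w := mem_connectedComponentIn hwO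
    obtain ⟨v, hv1, hv2⟩ := mem_closure_iff.1 hw.1 _ h1 h2
    have e1 := connectedComponentIn_eq hv1
    have e2 := connectedComponentIn_eq hv2
    rw [hCo.frontier_eq] at hw
    apply hw.2
    rw [hC, e2, ← e1]; exact h2
  by_contra hno
  push Not at hno
  have hbd : Bornology.IsBounded C := by
    refine (isBounded_closedBall (x := (0:ℂ)) (r := R)).subset fun w hw => ?_
    by_contra hwR
    refine hno w (by simpa using hwR) ?_
    exact ((hCo.isConnected_iff_isPathConnected.1 hCc).joinedIn z hzC w hw).mono hCsub
  apply hz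
  refine ⟨‖c‖ + 3, fun k => ?_⟩
  refine Complex.norm_le_of_forall_mem_frontier_norm_le hbd
    ((qm_diff c).iterate k).diffContOnCl (fun w hw => ?_) (subset_closure hzC)
  exact (K_lt ((K_inv_iter k).2 (hfr hw))).le

theorem not_lc_of_c_not_mem {c : ℂ} (hc : c ∉ filledJuliaQuad c) (hne : (juliaQuad c).Nonempty) :
    ¬ LocallyConnectedSpace (juliaQuad c) := by
  intro hlc
  obtain ⟨z2, hz2, hj⟩ := omega_far hc (‖c‖ + 3)
  have hj' : JoinedIn (juliaQuad c)ᶜ z2 c := (hj.mono (compl_subset_compl.2 (J_sub_K c))).symm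
  obtain ⟨u, hu, hue⟩ := path_log hj'
  have hz20 : z2 ≠ 0 := by
    rw [← norm_pos_iff]; linarith [norm_nonneg c]
  -- square root
  let s : ℂ → ℂ := fun z => Complex.exp ((u z + Complex.log (1 - z / z2) + Complex.log (-z2)) / 2)
  have hslit : ∀ z ∈ juliaQuad c, (1 - z / z2) ∈ Complex.slitPlane := by
    intro z hz
    left
    have h1 := K_lt (J_sub_K c hz)
    have h2 : ‖z / z2‖ < 1 := by
      rw [norm_div, div_lt_one (by positivity)]; linarith
    have := (Complex.abs_re_le_norm (z / z2))
    have := le_abs_self (z / z2).re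
    simp only [Complex.sub_re, Complex.one_re]
    linarith
  have hs : ContinuousOn s (juliaQuad c) := by
    refine Complex.continuous_exp.comp_continuousOn ?_
    refine ContinuousOn.div_const ((hu.add ?_).add continuousOn_const) _
    refine ContinuousOn.clog (by fun_prop) hslit
  have hs2 : ∀ z ∈ juliaQuad c, s z ^ 2 = z - c := by
    intro z hz
    rw [← hue z hz, ← Complex.exp_nat_mul]
    have e : ((2:ℕ):ℂ) * ((u z + Complex.log (1 - z / z2) + Complex.log (-z2)) / 2) =
        u z + Complex.log (1 - z / z2) + Complex.log (-z2) := by push_cast; ring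
    rw [e, Complex.exp_add, Complex.exp_add, Complex.exp_log (Complex.slitPlane_ne_zero (hslit z hz)),
      Complex.exp_log (neg_ne_zero.2 hz20)]
    field_simp
    ring
  have hs0 : ∀ z, s z ≠ 0 := fun z => Complex.exp_ne_zero _
  have hfs : ∀ z ∈ juliaQuad c, quadMap c (s z) = z := by
    intro z hz; simp [quadMap, hs2 z hz]
  have hfs' : ∀ z ∈ juliaQuad c, quadMap c (-s z) = z := by
    intro z hz; simp [quadMap, hs2 z hz]
  have hsJ : ∀ z ∈ juliaQuad c, s z ∈ juliaQuad c := fun z hz => J_inv.1 (by rwa [hfs z hz])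
  have hsJ' : ∀ z ∈ juliaQuad c, -s z ∈ juliaQuad c := fun z hz => J_inv.1 (by rwa [hfs' z hz])
  let T : juliaQuad c → juliaQuad c := fun w => ⟨quadMap c w, J_inv.2 w.2⟩
  have hT : Continuous T := ((qm_cont c).comp continuous_subtype_val).subtype_mk _
  let S : juliaQuad c → ℂ := fun w => s (quadMap c w)
  have hS : Continuous S := hs.comp_continuous ((qm_cont c).comp continuous_subtype_val) (fun w => J_inv.2 w.2)
  have hor : ∀ w : juliaQuad c, (w : ℂ) = S w ∨ (w : ℂ) = - S w := by
    intro w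
    rw [← sq_eq_sq_iff_eq_or_eq_neg]
    have := hs2 _ (J_inv.2 w.2)
    simp only [S]; rw [this]; simp [quadMap]
  classical
  let b : juliaQuad c → Bool := fun w => decide ((w : ℂ) = S w)
  have hA1 : IsClosed {w : juliaQuad c | (w : ℂ) = S w} := isClosed_eq continuous_subtype_val hS
  have hA2 : IsClosed {w : juliaQuad c | (w : ℂ) = - S w} := isClosed_eq continuous_subtype_val hS.neg
  have hcl : {w : juliaQuad c | (w : ℂ) = - S w} = {w : juliaQuad c | (w : ℂ) = S w}ᶜ := by
    ext w
    constructor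
    · intro h h'
      change (w : ℂ) = - S w at h
      change (w : ℂ) = S w at h'
      rw [h'] at h
      have : S w = 0 := by linear_combination h / 2
      exact hs0 _ this
    · intro h
      exact (hor w).resolve_left h
  have hA1o : IsOpen {w : juliaQuad c | (w : ℂ) = S w} := by
    rw [← compl_compl {w : juliaQuad c | (w : ℂ) = S w}, ← hcl]; exact hA2.isOpen_compl
  have hb : Continuous b := by
    refine continuous_bool_rng true |>.2 ?_
    have : b ⁻¹' {true} = {w : juliaQuad c | (w : ℂ) = S w} := by ext w; simp [b]
    rw [this]
    exact ⟨hA1, hA1o⟩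
  let e : juliaQuad c → (ℕ → Bool) := fun w k => b (T^[k] w)
  have he : Continuous e := continuous_pi fun k => hb.comp (hT.iterate k)
  haveI : CompactSpace (juliaQuad c) := isCompact_iff_compactSpace.1 (J_compact c)
  have hfin := range_fin he
  let I := range e
  haveI : Finite I := hfin
  let cons : Bool → (ℕ → Bool) → (ℕ → Bool) := fun b x n => Nat.casesOn n b x
  have hcons : ∀ bb, ∀ x ∈ range e, cons bb x ∈ range e := by
    rintro bb _ ⟨w, rfl⟩
    cases bb
    · let w' : juliaQuad c := ⟨-s w, hsJ' w w.2⟩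
      refine ⟨w', ?_⟩
      have hTw : T w' = w := Subtype.ext (hfs' w w.2)
      funext k
      cases k with
      | zero =>
        change decide ((w' : ℂ) = S w') = false
        have : S w' = s w := by change s (quadMap c (-s w)) = s w; rw [hfs' w w.2]
        rw [this, decide_eq_false_iff_not]
        intro h
        have h : -s w = s w := h
        exact hs0 w (by linear_combination -h / 2)
      | succ k =>
        change b (T^[k + 1] w') = b (T^[k] w)
        rw [Function.iterate_succ_apply, hTw]
    · let w' : juliaQuad c := ⟨s w, hsJ w w.2⟩
      refine ⟨w', ?_⟩
      have hTw : T w' = w := Subtype.ext (hfs w w.2)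
      funext k
      cases k with
      | zero =>
        change decide ((w' : ℂ) = S w') = true
        have : S w' = s w := by change s (quadMap c (s w)) = s w; rw [hfs w w.2]
        rw [this, decide_eq_true_iff]
      | succ k =>
        change b (T^[k + 1] w') = b (T^[k] w)
        rw [Function.iterate_succ_apply, hTw]
  let g : Bool × I → I := fun q => ⟨cons q.1 q.2, hcons _ _ q.2.2⟩
  have hg : Function.Injective g := by
    rintro ⟨b1, x1⟩ ⟨b2, x2⟩ h
    have h : cons b1 x1 = cons b2 x2 := congrArg Subtype.val h
    have h0 : b1 = b2 := congrFun h 0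
    have h1 : x1 = x2 := Subtype.ext (funext fun k => congrFun h (k + 1))
    rw [h0, h1]
  have hcard := Nat.card_le_card_of_injective g hg
  rw [Nat.card_prod] at hcard
  obtain ⟨w, hw⟩ := hne
  haveI : Nonempty I := ⟨⟨e ⟨w, hw⟩, mem_range_self _⟩⟩
  have hpos : 0 < Nat.card I := Nat.card_pos
  have : Nat.card Bool = 2 := by simp
  rw [this] at hcard
  omega

theorem hp_convex (a : ℝ) : Convex ℝ {s : ℂ | a < s.re} := convex_halfSpace_re_gt a
theorem hp_open (a : ℝ) : IsOpen {s : ℂ | a < s.re} := isOpen_lt continuous_const Complex.continuous_re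
theorem hp_ne (a : ℝ) : {s : ℂ | a < s.re}.Nonempty := ⟨((a + 1 : ℝ) : ℂ), by simp⟩

theorem bott_e (c : ℂ) : ∃ A : ℝ, 0 < A ∧ ∃ e : ℂ → ℂ, DifferentiableOn ℂ e {s | A < s.re} ∧
    (∀ s : ℂ, A < s.re → ‖e s‖ ≤ 1 / 2) ∧
    (∀ s : ℂ, A < s.re → e (s + Real.pi * Complex.I) = e s) ∧
    (∀ s : ℂ, A < s.re → Complex.exp (s + e s) ^ 2 + c = Complex.exp (2 * s + e (2 * s))) := by
  set A : ℝ := Real.log (8 * (‖c‖ + 1)) + 1 with hA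
  have hcn := norm_nonneg c
  have hA0 : 0 < A := by
    have : 0 ≤ Real.log (8 * (‖c‖ + 1)) := Real.log_nonneg (by linarith)
    linarith
  have hx : ∀ ζ : ℂ, A - 1 / 2 < ζ.re → ‖c * Complex.exp (-ζ)‖ ≤ 1 / 8 := by
    intro ζ hζ
    rw [norm_mul, Complex.norm_exp, Complex.neg_re]
    have h1 : Real.exp (-ζ.re) ≤ Real.exp (-Real.log (8 * (‖c‖ + 1))) :=
      Real.exp_le_exp.2 (by linarith)
    rw [Real.exp_neg (Real.log _), Real.exp_log (by linarith)] at h1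
    calc ‖c‖ * Real.exp (-ζ.re) ≤ (‖c‖ + 1) * (8 * (‖c‖ + 1))⁻¹ := by gcongr; linarith
      _ = 1 / 8 := by field_simp
  let q : ℂ → ℂ := fun ζ => Complex.log (1 + -(c * Complex.exp (-ζ)))
  have hq1 : ∀ ζ : ℂ, A - 1 / 2 < ζ.re → ‖q ζ‖ ≤ 1 / 4 := by
    intro ζ hζ
    have h1 := hx ζ hζ
    have := Complex.norm_log_one_add_half_le_self (z := -(c * Complex.exp (-ζ))) (by rw [norm_neg]; linarith)
    rw [norm_neg] at this
    simp only [q]; linarith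
  have hslit : ∀ ζ : ℂ, A - 1 / 2 < ζ.re → 1 + -(c * Complex.exp (-ζ)) ∈ Complex.slitPlane := by
    intro ζ hζ
    left
    have h1 := hx ζ hζ
    have := Complex.re_le_norm (c * Complex.exp (-ζ))
    simp only [Complex.add_re, Complex.one_re, Complex.neg_re]
    linarith
  have hqe : ∀ ζ : ℂ, A - 1 / 2 < ζ.re → Complex.exp (q ζ) = 1 - c * Complex.exp (-ζ) := by
    intro ζ hζ
    simp only [q]
    rw [Complex.exp_log (Complex.slitPlane_ne_zero (hslit ζ hζ))]; ring
  have hqd : ∀ ζ : ℂ, A - 1 / 2 < ζ.re →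
      HasDerivAt q (c * Complex.exp (-ζ) / (1 + -(c * Complex.exp (-ζ)))) ζ := by
    intro ζ hζ
    have h1 : HasDerivAt (fun ζ : ℂ => 1 + -(c * Complex.exp (-ζ))) (c * Complex.exp (-ζ)) ζ := by
      have h2 : HasDerivAt (fun ζ : ℂ => Complex.exp (-ζ)) (Complex.exp (-ζ) * -1) ζ :=
        (hasDerivAt_neg ζ).cexp
      have := ((h2.const_mul c).neg).const_add 1
      have e1 : c * Complex.exp (-ζ) = -(c * (Complex.exp (-ζ) * -1)) := by ring
      rw [e1]; exact this
    exact h1.clog (hslit ζ hζ)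
  have hqd1 : ∀ ζ : ℂ, A - 1 / 2 < ζ.re →
      ‖c * Complex.exp (-ζ) / (1 + -(c * Complex.exp (-ζ)))‖ ≤ 1 / 2 := by
    intro ζ hζ
    have h1 := hx ζ hζ
    have h2 : 7 / 8 ≤ ‖1 + -(c * Complex.exp (-ζ))‖ := by
      have := norm_sub_le_norm_add (1:ℂ) (-(c * Complex.exp (-ζ)))
      rw [norm_neg, norm_one] at this
      linarith
    rw [norm_div, div_le_iff₀ (by linarith)]
    linarith
  have hqL : ∀ ζ ζ' : ℂ, A - 1 / 2 < ζ.re → A - 1 / 2 < ζ'.re → ‖q ζ - q ζ'‖ ≤ 1 / 2 * ‖ζ - ζ'‖ := by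
    intro ζ ζ' h h'
    exact (hp_convex (A - 1 / 2)).norm_image_sub_le_of_norm_hasDerivWithin_le
      (fun v hv => (hqd v hv).hasDerivWithinAt) hqd1 h' h
  have hqp : ∀ ζ, q (ζ + 2 * Real.pi * Complex.I) = q ζ := by
    intro ζ
    have : Complex.exp (-(ζ + 2 * Real.pi * Complex.I)) = Complex.exp (-ζ) := by
      rw [neg_add, ← sub_eq_add_neg, Complex.exp_sub, Complex.exp_two_pi_mul_I, div_one]
    simp only [q, this]
  let E : ℕ → ℂ → ℂ := fun n => Nat.rec (fun _ => 0)
    (fun _ g s => (1 / 2) * (g (2 * s) + q (2 * s + g (2 * s)))) n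
  have hE0 : ∀ s, E 0 s = 0 := fun s => rfl
  have hEs : ∀ n s, E (n + 1) s = (1 / 2) * (E n (2 * s) + q (2 * s + E n (2 * s))) := fun n s => rfl
  have h2s : ∀ s : ℂ, A < s.re → A < (2 * s).re := by
    intro s hs; simp; linarith
  have hEb : ∀ n, ∀ s : ℂ, A < s.re → ‖E n s‖ ≤ 1 / 2 := by
    intro n
    induction n with
    | zero => intro s _; rw [hE0]; simp
    | succ n ih =>
      intro s hs
      have h1 := ih _ (h2s s hs)
      have h3 := (abs_le.1 ((Complex.abs_re_le_norm _).trans h1)).1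
      have h2 := hq1 (2 * s + E n (2 * s)) (by
        rw [Complex.add_re]; have := h2s s hs; linarith)
      rw [hEs, norm_mul]
      have := norm_add_le (E n (2 * s)) (q (2 * s + E n (2 * s)))
      norm_num
      linarith
  have hre : ∀ (g : ℂ) (s : ℂ), A < s.re → ‖g‖ ≤ 1 / 2 → A - 1 / 2 < (2 * s + g).re := by
    intro g s hs hg
    have h3 := (abs_le.1 ((Complex.abs_re_le_norm _).trans hg)).1
    rw [Complex.add_re]; have := h2s s hs; linarith
  have hEd : ∀ n, DifferentiableOn ℂ (E n) {s | A < s.re} := by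
    intro n
    induction n with
    | zero => exact differentiableOn_const 0
    | succ n ih =>
      intro s hs
      have hs : A < s.re := hs
      have h1 : DifferentiableAt ℂ (E n) (2 * s) :=
        ih.differentiableAt ((hp_open A).mem_nhds (h2s s hs))
      have h2 : DifferentiableAt ℂ (fun s => E n (2 * s)) s :=
        DifferentiableAt.comp (f := fun s : ℂ => 2 * s) s h1 (by fun_prop)
      have h3 : DifferentiableAt ℂ q (2 * s + E n (2 * s)) :=
        (hqd _ (hre _ s hs (hEb n _ (h2s s hs)))).differentiableAt
      have h4 : DifferentiableAt ℂ (fun s => q (2 * s + E n (2 * s))) s :=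
        DifferentiableAt.comp (f := fun s : ℂ => 2 * s + E n (2 * s)) s h3
          ((by fun_prop : DifferentiableAt ℂ (fun s : ℂ => 2 * s) s).add h2)
      exact ((h2.add h4).const_mul (1 / 2)).differentiableWithinAt
  have hEp : ∀ n, ∀ s, E n (s + Real.pi * Complex.I) = E n s := by
    intro n
    induction n with
    | zero => intro s; rfl
    | succ n ih =>
      intro s
      have : 2 * (s + Real.pi * Complex.I) = 2 * s + Real.pi * Complex.I + Real.pi * Complex.I := by ring
      rw [hEs, hEs, this, ih, ih]
      rw [← hqp (2 * s + E n (2 * s))]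
      congr 3; ring
  have hEc : ∀ n, ∀ s : ℂ, A < s.re → ‖E (n + 1) s - E n s‖ ≤ (3 / 4) ^ n := by
    intro n
    induction n with
    | zero => intro s hs; rw [hE0]; have := hEb 1 s hs; simp at this ⊢; linarith
    | succ n ih =>
      intro s hs
      have h1 := ih _ (h2s s hs)
      have h2 := hqL _ _ (hre _ s hs (hEb (n + 1) _ (h2s s hs))) (hre _ s hs (hEb n _ (h2s s hs)))
      rw [add_sub_add_left_eq_sub] at h2
      have e : E (n + 1 + 1) s - E (n + 1) s = (1 / 2) * ((E (n + 1) (2 * s) - E n (2 * s)) +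
        (q (2 * s + E (n + 1) (2 * s)) - q (2 * s + E n (2 * s)))) := by
        rw [hEs (n + 1) s, hEs n s]; ring
      rw [e, norm_mul, pow_succ]
      have := norm_add_le (E (n + 1) (2 * s) - E n (2 * s))
        (q (2 * s + E (n + 1) (2 * s)) - q (2 * s + E n (2 * s)))
      norm_num
      linarith
  have hsum : Summable fun n : ℕ => (3 / 4 : ℝ) ^ n := summable_geometric_of_lt_one (by norm_num) (by norm_num)
  let e : ℂ → ℂ := fun s => ∑' n, (E (n + 1) s - E n s)
  have hlim : ∀ s : ℂ, A < s.re → Tendsto (fun n => E n s) atTop (𝓝 (e s)) := by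
    intro s hs
    have h1 : Summable fun n => E (n + 1) s - E n s :=
      Summable.of_norm_bounded hsum (fun n => hEc n s hs)
    have h2 := h1.hasSum.tendsto_sum_nat
    refine h2.congr fun n => ?_
    rw [Finset.sum_range_sub (fun k => E k s), hE0, sub_zero]
  have heb : ∀ s : ℂ, A < s.re → ‖e s‖ ≤ 1 / 2 := fun s hs =>
    le_of_tendsto (hlim s hs).norm (Eventually.of_forall fun n => hEb n s hs)
  have hrec : ∀ s : ℂ, A < s.re → e s = (1 / 2) * (e (2 * s) + q (2 * s + e (2 * s))) := by
    intro s hs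
    have h1 := (hlim s hs).comp (tendsto_add_atTop_nat 1)
    have h2 := hlim (2 * s) (h2s s hs)
    have hqc : ContinuousAt q (2 * s + e (2 * s)) :=
      (hqd _ (hre _ s hs (heb _ (h2s s hs)))).continuousAt
    have h3 := (h2.add (hqc.tendsto.comp (h2.const_add (2 * s)))).const_mul (1 / 2)
    exact tendsto_nhds_unique h1 h3
  refine ⟨A, hA0, e, ?_, heb, ?_, ?_⟩
  · exact Complex.differentiableOn_tsum_of_summable_norm hsum
      (fun n => (hEd (n + 1)).sub (hEd n)) (hp_open A) (fun n s hs => hEc n s hs)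
  · intro s hs
    simp only [e, hEp]
  · intro s hs
    have h2 := hrec s hs
    have h4 := hqe _ (hre _ s hs (heb _ (h2s s hs)))
    rw [← Complex.exp_nat_mul]
    have : ((2:ℕ):ℂ) * (s + e s) = (2 * s + e (2 * s)) + q (2 * s + e (2 * s)) := by
      push_cast; linear_combination 2 * h2
    rw [this, Complex.exp_add, h4, Complex.exp_neg]
    have := Complex.exp_ne_zero (2 * s + e (2 * s))
    field_simp
    ring

theorem hp_ident {a A : ℝ} {g1 g2 : ℂ → ℂ} (h1 : DifferentiableOn ℂ g1 {s | a < s.re})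
    (h2 : DifferentiableOn ℂ g2 {s | a < s.re}) (h : ∀ s : ℂ, A < s.re → g1 s = g2 s) :
    ∀ s : ℂ, a < s.re → g1 s = g2 s := by
  have hz : (((max a A) + 1 : ℝ) : ℂ) ∈ {s : ℂ | a < s.re} := by
    change a < (((max a A) + 1 : ℝ) : ℂ).re
    rw [Complex.ofReal_re]; linarith [le_max_left a A]
  have := (h1.analyticOnNhd (hp_open a)).eqOn_of_preconnected_of_eventuallyEq
    (h2.analyticOnNhd (hp_open a)) (hp_convex a).isPreconnected hz (by
      filter_upwards [(hp_open A).mem_nhds (x := (((max a A) + 1 : ℝ) : ℂ)) (by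
        change A < (((max a A) + 1 : ℝ) : ℂ).re
        rw [Complex.ofReal_re]; linarith [le_max_right a A])] with s hs using h s hs)
  exact fun s hs => this hs

theorem hp_two {a : ℝ} (ha : 0 ≤ a) {s : ℂ} (hs : a < s.re) : a < (2 * s).re := by
  simp; linarith

theorem hp_two_diff {a : ℝ} {g : ℂ → ℂ} (h1 : DifferentiableOn ℂ g {s | a < s.re}) :
    DifferentiableOn ℂ (fun s => g (2 * s)) {s | a / 2 < s.re} := by
  refine h1.comp (f := fun s : ℂ => 2 * s) (by fun_prop) ?_
  intro s hs
  have hs : a / 2 < s.re := hs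
  change a < (2 * s).re
  simp; linarith

theorem bott_feq {c : ℂ} {A a : ℝ} (ha : 0 ≤ a) {ψ0 g : ℂ → ℂ} (hA : 0 < A)
    (hf : ∀ s : ℂ, A < s.re → quadMap c (ψ0 s) = ψ0 (2 * s))
    (hd : DifferentiableOn ℂ g {s | a < s.re}) (hg : ∀ s : ℂ, A < s.re → g s = ψ0 s) :
    ∀ s : ℂ, a < s.re → quadMap c (g s) = g (2 * s) := by
  refine hp_ident (A := A) ((qm_diff c).comp_differentiableOn hd)
    ((hp_two_diff hd).mono fun s (hs : a < s.re) => ?_) ?_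
  · change a / 2 < s.re; linarith
  · intro s hs
    rw [hg s hs, hf s hs, hg _ (hp_two hA.le hs)]

theorem bott_iter {c : ℂ} {a : ℝ} (ha : 0 ≤ a) {g : ℂ → ℂ}
    (hf : ∀ s : ℂ, a < s.re → quadMap c (g s) = g (2 * s)) (k : ℕ) :
    ∀ s : ℂ, a < s.re → (quadMap c)^[k] (g s) = g (2 ^ k * s) := by
  induction k with
  | zero => intro s _; simp
  | succ k ih =>
    intro s hs
    rw [Function.iterate_succ_apply, hf s hs, ih _ (hp_two ha hs)]
    congr 1; ring

theorem bott_omega {c : ℂ} {A a : ℝ} (ha : 0 ≤ a) {g : ℂ → ℂ}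
    (hf : ∀ s : ℂ, a < s.re → quadMap c (g s) = g (2 * s))
    (hgrow : ∀ s : ℂ, A < s.re → Real.exp (s.re - 1 / 2) ≤ ‖g s‖) :
    ∀ s : ℂ, a < s.re → g s ∉ filledJuliaQuad c := by
  rintro s hs ⟨B, hB⟩
  have hs0 : 0 < s.re := by linarith
  have ht : Tendsto (fun k : ℕ => (2:ℝ) ^ k * s.re) atTop atTop :=
    (tendsto_pow_atTop_atTop_of_one_lt one_lt_two).atTop_mul_const hs0
  obtain ⟨k, hk⟩ := (ht.eventually_gt_atTop (max A (|B| + 1))).exists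
  have h1 : ((2:ℂ) ^ k * s).re = 2 ^ k * s.re := by
    have : (2:ℂ) ^ k = ((2 ^ k : ℝ) : ℂ) := by push_cast; rfl
    rw [this, Complex.re_ofReal_mul]
  have h2 := hgrow (2 ^ k * s) (by rw [h1]; exact (le_max_left _ _).trans_lt hk)
  rw [← bott_iter ha hf k s hs, h1] at h2
  have h3 := hB k
  have h4 := (le_max_right A (|B| + 1)).trans_lt hk
  have h5 := Real.add_one_le_exp (2 ^ k * s.re - 1 / 2)
  linarith [le_abs_self B]

theorem bott_ext {c : ℂ} (hc : c ∈ filledJuliaQuad c) {A : ℝ} (hA : 0 < A) {ψ0 : ℂ → ℂ}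
    (hd : DifferentiableOn ℂ ψ0 {s | A < s.re})
    (hf : ∀ s : ℂ, A < s.re → quadMap c (ψ0 s) = ψ0 (2 * s))
    (hgrow : ∀ s : ℂ, A < s.re → Real.exp (s.re - 1 / 2) ≤ ‖ψ0 s‖) :
    ∃ ψ : ℂ → ℂ, DifferentiableOn ℂ ψ {s | 0 < s.re} ∧ ∀ s : ℂ, A < s.re → ψ s = ψ0 s := by
  have hk : ∀ k : ℕ, ∃ g : ℂ → ℂ, DifferentiableOn ℂ g {s | A / 2 ^ k < s.re} ∧
      ∀ s : ℂ, A < s.re → g s = ψ0 s := by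
    intro k
    induction k with
    | zero => exact ⟨ψ0, by simpa using hd, fun s _ => rfl⟩
    | succ k ih =>
      obtain ⟨g, hgd, hg⟩ := ih
      have ha : 0 ≤ A / 2 ^ k := by positivity
      have hfg := bott_feq ha hA hf hgd hg
      have hom := bott_omega (A := A) ha hfg (fun s hs => by rw [hg s hs]; exact hgrow s hs)
      have e : A / 2 ^ (k + 1) = A / 2 ^ k / 2 := by rw [pow_succ]; field_simp
      rw [e]
      have h1 := hp_two_diff hgd
      obtain ⟨u, hu, hue⟩ := holo_log (hp_convex (A / 2 ^ k / 2)) (hp_open _) (hp_ne _)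
        (h1.sub_const c) (fun s hs h => by
          refine hom (2 * s) ?_ ?_
          · have hs : A / 2 ^ k / 2 < s.re := hs
            simp; linarith
          · rw [sub_eq_zero.1 h]; exact hc)
      have hsub : {s : ℂ | A < s.re} ⊆ {s | A / 2 ^ k / 2 < s.re} := by
        intro s (hs : A < s.re)
        change A / 2 ^ k / 2 < s.re
        have : A / 2 ^ k ≤ A := div_le_self hA.le (one_le_pow₀ (by norm_num))
        linarith
      have hud : DifferentiableOn ℂ (fun s => Complex.exp (u s / 2)) {s | A / 2 ^ k / 2 < s.re} :=
        (hu.div_const 2).cexp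
      have hsq : EqOn ((fun s => Complex.exp (u s / 2)) ^ 2) (ψ0 ^ 2) {s : ℂ | A < s.re} := by
        intro s hs
        simp only [Pi.pow_apply]
        rw [← Complex.exp_nat_mul]
        have : ((2:ℕ):ℂ) * (u s / 2) = u s := by push_cast; ring
        rw [this, hue s (hsub hs), hg _ (hp_two hA.le hs), ← hf s hs]
        simp [quadMap]
      rcases (hp_convex A).isPreconnected.eq_or_eq_neg_of_sq_eq
        (hud.continuousOn.mono hsub) hd.continuousOn hsq
        (fun {s} hs h0 => by
          have := hgrow s hs
          rw [h0, norm_zero] at this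
          exact absurd (Real.exp_pos _) (not_lt.2 this)) with h | h
      · exact ⟨_, hud, fun s hs => h hs⟩
      · refine ⟨_, hud.neg, fun s hs => ?_⟩
        have := h hs
        simp only [Pi.neg_apply] at this
        rw [Pi.neg_apply, this, neg_neg]
  choose g hgd hg using hk
  have hanti : ∀ {j k : ℕ}, j ≤ k → A / 2 ^ k ≤ A / 2 ^ j := by
    intro j k hjk
    exact div_le_div_of_nonneg_left hA.le (by positivity) (pow_le_pow_right₀ (by norm_num) hjk)
  have hagree : ∀ j k, j ≤ k → ∀ s : ℂ, A / 2 ^ j < s.re → g j s = g k s := by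
    intro j k hjk
    refine hp_ident (A := A) (hgd j) ((hgd k).mono fun s (hs : A / 2 ^ j < s.re) => ?_) ?_
    · exact (hanti hjk).trans_lt hs
    · intro s hs; rw [hg j s hs, hg k s hs]
  have hex : ∀ s : ℂ, ∃ k : ℕ, 0 < s.re → A / 2 ^ k < s.re := by
    intro s
    by_cases hs : 0 < s.re
    · obtain ⟨k, hk⟩ := pow_unbounded_of_one_lt (A / s.re) (one_lt_two (α := ℝ))
      refine ⟨k, fun _ => ?_⟩
      rw [div_lt_iff₀ hs] at hk
      rw [div_lt_iff₀ (by positivity)]; linarith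
    · exact ⟨0, fun h => absurd h hs⟩
  choose κ hκ using hex
  have hκeq : ∀ s : ℂ, 0 < s.re → ∀ k, A / 2 ^ k < s.re → g (κ s) s = g k s := by
    intro s hs k hk
    rcases le_total (κ s) k with h | h
    · exact hagree _ _ h s (hκ s hs)
    · exact (hagree _ _ h s hk).symm
  refine ⟨fun s => g (κ s) s, ?_, ?_⟩
  · intro s hs
    have hs' := hκ s hs
    have h1 : DifferentiableAt ℂ (g (κ s)) s :=
      (hgd (κ s)).differentiableAt ((hp_open _).mem_nhds hs')
    refine (h1.congr_of_eventuallyEq ?_).differentiableWithinAt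
    filter_upwards [(hp_open _).mem_nhds hs', (hp_open 0).mem_nhds hs] with w hw hw0
    exact hκeq w hw0 _ hw
  · intro s hs
    exact hg _ s hs

structure Bott (c : ℂ) (ψ : ℂ → ℂ) : Prop where
  diff : DifferentiableOn ℂ ψ {s : ℂ | 0 < s.re}
  feq : ∀ s : ℂ, 0 < s.re → quadMap c (ψ s) = ψ (2 * s)
  neg : ∀ s : ℂ, 0 < s.re → ψ (s + Real.pi * Complex.I) = -ψ s
  inj : ∀ s s' : ℂ, 0 < s.re → 0 < s'.re → ψ s = ψ s' → ∃ m : ℤ, s = s' + 2 * Real.pi * Complex.I * m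
  img : ψ '' {s : ℂ | 0 < s.re} = (filledJuliaQuad c)ᶜ
  bdd : ∃ B : ℝ, ∀ s : ℂ, 0 < s.re → s.re ≤ 1 → ‖ψ s‖ ≤ B
  far : ∀ M : ℝ, ∃ A : ℝ, ∀ s : ℂ, A < s.re → M < ‖ψ s‖

theorem neg_per {ψ : ℂ → ℂ} (hneg : ∀ s : ℂ, 0 < s.re → ψ (s + Real.pi * Complex.I) = -ψ s) (m : ℤ) :
    ∀ s : ℂ, 0 < s.re → ψ (s + 2 * Real.pi * Complex.I * m) = ψ s := by
  have h2 : ∀ s : ℂ, 0 < s.re → ψ (s + 2 * Real.pi * Complex.I) = ψ s := by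
    intro s hs
    have : s + 2 * Real.pi * Complex.I = (s + Real.pi * Complex.I) + Real.pi * Complex.I := by ring
    rw [this, hneg _ (by simpa using hs), hneg s hs, neg_neg]
  induction m using Int.induction_on with
  | zero => intro s _; simp
  | succ i ih =>
    intro s hs
    rw [← ih s hs, ← h2 (s + 2 * Real.pi * Complex.I * (i : ℤ)) (by simpa using hs)]
    congr 1; push_cast; ring
  | pred i ih =>
    intro s hs
    rw [← ih s hs, ← h2 (s + 2 * Real.pi * Complex.I * (-(i : ℤ) - 1 : ℤ)) (by simpa using hs)]
    congr 1; push_cast; ring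

theorem pow_re (k : ℕ) (s : ℂ) : ((2:ℂ) ^ k * s).re = 2 ^ k * s.re := by
  have : (2:ℂ) ^ k = ((2 ^ k : ℝ) : ℂ) := by push_cast; rfl
  rw [this, Complex.re_ofReal_mul]

theorem bott_exists {c : ℂ} (hc : c ∈ filledJuliaQuad c) : ∃ ψ, Bott c ψ := by
  obtain ⟨A, hA, e, hed, heb, hep, hef⟩ := bott_e c
  let ψ0 : ℂ → ℂ := fun s => Complex.exp (s + e s)
  have hd0 : DifferentiableOn ℂ ψ0 {s | A < s.re} := (differentiableOn_id.add hed).cexp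
  have hf0 : ∀ s : ℂ, A < s.re → quadMap c (ψ0 s) = ψ0 (2 * s) := fun s hs => hef s hs
  have hgrow0 : ∀ s : ℂ, A < s.re → Real.exp (s.re - 1 / 2) ≤ ‖ψ0 s‖ := by
    intro s hs
    simp only [ψ0]
    rw [Complex.norm_exp, Complex.add_re]
    have := (abs_le.1 ((Complex.abs_re_le_norm _).trans (heb s hs))).1
    exact Real.exp_le_exp.2 (by linarith)
  have hup0 : ∀ s : ℂ, A < s.re → ‖ψ0 s‖ ≤ Real.exp (s.re + 1 / 2) := by
    intro s hs
    simp only [ψ0]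
    rw [Complex.norm_exp, Complex.add_re]
    have := (abs_le.1 ((Complex.abs_re_le_norm _).trans (heb s hs))).2
    exact Real.exp_le_exp.2 (by linarith)
  obtain ⟨ψ, hd, hψ⟩ := bott_ext hc hA hd0 hf0 hgrow0
  have hfeq := bott_feq (le_refl 0) hA hf0 hd hψ
  have hgrow : ∀ s : ℂ, A < s.re → Real.exp (s.re - 1 / 2) ≤ ‖ψ s‖ := by
    intro s hs; rw [hψ s hs]; exact hgrow0 s hs
  have hom := bott_omega (le_refl 0) hfeq hgrow
  have h0K : (0:ℂ) ∈ filledJuliaQuad c := by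
    rw [← K_inv]; simpa [quadMap] using hc
  have hne0 : ∀ s : ℂ, 0 < s.re → ψ s ≠ 0 := fun s hs h => hom s hs (by rw [h]; exact h0K)
  have hneg : ∀ s : ℂ, 0 < s.re → ψ (s + Real.pi * Complex.I) = -ψ s := by
    refine hp_ident (A := A) ?_ hd.neg ?_
    · refine hd.comp (f := fun s : ℂ => s + Real.pi * Complex.I) (by fun_prop) ?_
      intro s (hs : 0 < s.re)
      change 0 < (s + Real.pi * Complex.I).re
      simpa using hs
    · intro s hs
      have hs' : A < (s + Real.pi * Complex.I).re := by simpa using hs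
      rw [hψ _ hs', hψ s hs]
      simp only [ψ0]
      rw [hep s hs]
      have : s + Real.pi * Complex.I + e s = (s + e s) + Real.pi * Complex.I := by ring
      rw [this, Complex.exp_add, Complex.exp_pi_mul_I]; ring
  have hper := neg_per hneg
  -- Lipschitz estimate on `A + 1 < re`
  have hder : ∀ s ∈ {s : ℂ | A + 2 < s.re}, ‖deriv e s‖ ≤ 1 / 2 := by
    intro s (hs : A + 2 < s.re)
    have hsub : ball s 2 ⊆ {s : ℂ | A < s.re} := by
      intro w hw
      rw [mem_ball, dist_eq_norm] at hw
      have := (abs_lt.1 ((Complex.abs_re_le_norm _).trans_lt hw)).1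
      rw [Complex.sub_re] at this
      change A < w.re
      linarith
    have := (taylor_two (B := 1 / 2) (two_pos (α := ℝ)) (hed.mono hsub) (fun w hw => heb w (hsub hw))).1
    linarith
  have hlip : ∀ s s' : ℂ, A + 2 < s.re → A + 2 < s'.re → ‖e s - e s'‖ ≤ 1 / 2 * ‖s - s'‖ := by
    intro s s' h h'
    refine (hp_convex (A + 2)).norm_image_sub_le_of_norm_deriv_le (fun w hw => ?_) hder h' h
    refine hed.differentiableAt ((hp_open A).mem_nhds ?_)
    have hw : A + 2 < w.re := hw
    change A < w.re
    linarith
  have hep' : ∀ (m : ℤ) (s : ℂ), A < s.re → e (s + 2 * Real.pi * Complex.I * m) = e s := by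
    intro m
    have hep2 : ∀ s : ℂ, A < s.re → e (s + 2 * Real.pi * Complex.I) = e s := by
      intro s hs
      have : s + 2 * Real.pi * Complex.I = (s + Real.pi * Complex.I) + Real.pi * Complex.I := by ring
      rw [this, hep _ (by simpa using hs), hep s hs]
    induction m using Int.induction_on with
    | zero => intro s _; simp
    | succ i ih =>
      intro s hs
      rw [← ih s hs, ← hep2 (s + 2 * Real.pi * Complex.I * (i : ℤ)) (by simpa using hs)]
      congr 1; push_cast; ring
    | pred i ih =>
      intro s hs
      rw [← ih s hs, ← hep2 (s + 2 * Real.pi * Complex.I * (-(i : ℤ) - 1 : ℤ)) (by simpa using hs)]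
      congr 1; push_cast; ring
  have hinj0 : ∀ s s' : ℂ, A + 2 < s.re → A + 2 < s'.re → ψ s = ψ s' →
      ∃ m : ℤ, s = s' + 2 * Real.pi * Complex.I * m := by
    intro s s' hs hs' h
    rw [hψ s (by linarith), hψ s' (by linarith)] at h
    obtain ⟨m, hm⟩ := Complex.exp_eq_exp_iff_exists_int.1 h
    refine ⟨m, ?_⟩
    have h1 := hep' m s' (by linarith)
    have hs'' : A + 2 < (s' + 2 * Real.pi * Complex.I * m).re := by simpa using hs'
    have h2 := hlip s _ hs hs''
    rw [h1] at h2
    have h3 : s - (s' + 2 * Real.pi * Complex.I * m) = -(e s - e s') := by linear_combination hm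
    rw [← norm_neg, ← h3] at h2
    have h4 : ‖s - (s' + 2 * Real.pi * Complex.I * m)‖ = 0 :=
      le_antisymm (by linarith) (norm_nonneg _)
    exact sub_eq_zero.1 (norm_eq_zero.1 h4)
  have hinjk : ∀ k : ℕ, ∀ s s' : ℂ, 0 < s.re → 0 < s'.re → A + 2 < 2 ^ k * s.re →
      A + 2 < 2 ^ k * s'.re → ψ s = ψ s' → ∃ m : ℤ, s = s' + 2 * Real.pi * Complex.I * m := by
    intro k
    induction k with
    | zero => intro s s' _ _ h1 h2; exact hinj0 s s' (by simpa using h1) (by simpa using h2)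
    | succ k ih =>
      intro s s' h0 h0' h1 h2 h
      obtain ⟨m, hm⟩ := ih (2 * s) (2 * s') (by simpa using h0) (by simpa using h0')
        (by rw [pow_succ] at h1; simp; linarith) (by rw [pow_succ] at h2; simp; linarith)
        (by rw [← hfeq s h0, ← hfeq s' h0', h])
      rcases Int.even_or_odd' m with ⟨j, hj | hj⟩
      · refine ⟨j, ?_⟩
        rw [hj] at hm; push_cast at hm
        linear_combination hm / 2
      · exfalso
        rw [hj] at hm; push_cast at hm
        have e1 : s = (s' + Real.pi * Complex.I) + 2 * Real.pi * Complex.I * j := by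
          linear_combination hm / 2
        rw [e1, hper j _ (by simpa using h0'), hneg s' h0'] at h
        exact hne0 s' h0' (by linear_combination -h / 2)
  have hbig : ∀ (x : ℝ), 0 < x → ∀ M : ℝ, ∃ k : ℕ, ∀ j ≥ k, M < 2 ^ j * x := by
    intro x hx M
    have ht : Tendsto (fun k : ℕ => (2:ℝ) ^ k * x) atTop atTop :=
      (tendsto_pow_atTop_atTop_of_one_lt one_lt_two).atTop_mul_const hx
    exact eventually_atTop.1 (ht.eventually_gt_atTop M)
  refine ⟨ψ, hd, hfeq, hneg, ?_, ?_, ?_, ?_⟩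
  · intro s s' hs hs' h
    obtain ⟨k, hk⟩ := hbig s.re hs (A + 2)
    obtain ⟨k', hk'⟩ := hbig s'.re hs' (A + 2)
    exact hinjk (max k k') s s' hs hs' (hk _ (le_max_left _ _)) (hk' _ (le_max_right _ _)) h
  · apply subset_antisymm
    · rintro _ ⟨s, hs, rfl⟩
      exact hom s hs
    · -- surjectivity
      have hfar : ∀ w : ℂ, A + 3 < w.re → ∃ s : ℂ, A < s.re ∧ s + e s = w := by
        intro w hw
        have hB : ∀ s ∈ closedBall w (1 / 2), A + 2 < s.re := by
          intro s hs
          rw [mem_closedBall, dist_eq_norm] at hs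
          have := (abs_le.1 ((Complex.abs_re_le_norm _).trans hs)).1
          rw [Complex.sub_re] at this
          linarith
        have hm : MapsTo (fun s => w - e s) (closedBall w (1 / 2)) (closedBall w (1 / 2)) := by
          intro s hs
          rw [mem_closedBall, dist_eq_norm]
          have := heb s (by linarith [hB s hs])
          simpa using this
        have hcw : ContractingWith (1 / 2) (hm.restrict _ _ _) := by
          refine ⟨by
            rw [← NNReal.coe_lt_coe]; norm_num, ?_⟩
          rw [lipschitzWith_iff_dist_le_mul]
          intro a b
          change dist (w - e a) (w - e b) ≤ _ * dist (a : ℂ) b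
          rw [dist_eq_norm, dist_eq_norm, sub_sub_sub_cancel_left, norm_sub_rev]
          simpa using hlip a b (hB a a.2) (hB b b.2)
        obtain ⟨y, hy, hfix, -⟩ := hcw.exists_fixedPoint' (isClosed_closedBall.isComplete) hm
          (mem_closedBall_self (by norm_num)) (edist_ne_top _ _)
        refine ⟨y, by linarith [hB y hy], ?_⟩
        have hfix : w - e y = y := hfix
        linear_combination -hfix
      have hfar' : ∀ z : ℂ, Real.exp (A + 3) < ‖z‖ → ∃ s : ℂ, 0 < s.re ∧ ψ s = z := by
        intro z hz
        have hz0 : z ≠ 0 := norm_pos_iff.1 ((Real.exp_pos _).trans hz)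
        have hw : A + 3 < (Complex.log z).re := by
          rw [Complex.log_re, Real.lt_log_iff_exp_lt (norm_pos_iff.2 hz0)]; exact hz
        obtain ⟨s, hsA, hsw⟩ := hfar (Complex.log z) hw
        refine ⟨s, by linarith, ?_⟩
        rw [hψ s hsA]
        simp only [ψ0]
        rw [hsw, Complex.exp_log hz0]
      have hall : ∀ k : ℕ, ∀ z : ℂ, Real.exp (A + 3) < ‖(quadMap c)^[k] z‖ → ∃ s : ℂ, 0 < s.re ∧ ψ s = z := by
        intro k
        induction k with
        | zero => intro z hz; exact hfar' z hz
        | succ k ih =>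
          intro z hz
          obtain ⟨s, hs, hsz⟩ := ih (quadMap c z) hz
          have hs2 : 0 < (s / 2).re := by
            have : s / 2 = ((1 / 2 : ℝ) : ℂ) * s := by push_cast; ring
            rw [this, Complex.re_ofReal_mul]; linarith
          have h1 := hfeq (s / 2) hs2
          rw [mul_div_cancel₀ s two_ne_zero, hsz] at h1
          unfold quadMap at h1
          have h2 : (ψ (s / 2)) ^ 2 = z ^ 2 := by linear_combination h1
          rcases sq_eq_sq_iff_eq_or_eq_neg.1 h2 with h | h
          · exact ⟨_, hs2, h⟩
          · refine ⟨s / 2 + Real.pi * Complex.I, by simpa using hs2, ?_⟩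
            rw [hneg _ hs2, h, neg_neg]
      intro z hz
      have : ∃ k : ℕ, Real.exp (A + 3) < ‖(quadMap c)^[k] z‖ := by
        by_contra hcon
        push Not at hcon
        exact hz ⟨_, hcon⟩
      obtain ⟨k, hk⟩ := this
      obtain ⟨s, hs, h⟩ := hall k z hk
      exact ⟨s, hs, h⟩
  · set B : ℝ := Real.exp (2 * (A + 1) + 1 / 2) + ‖c‖ + 2 with hB
    have hcn := norm_nonneg c
    have hexp := Real.exp_pos (2 * (A + 1) + 1 / 2)
    have hk : ∀ k : ℕ, ∀ s : ℂ, 0 < s.re → s.re ≤ 2 * (A + 1) → A < 2 ^ k * s.re → ‖ψ s‖ ≤ B := by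
      intro k
      induction k with
      | zero =>
        intro s hs h1 h2
        rw [pow_zero, one_mul] at h2
        rw [hψ s h2]
        refine (hup0 s h2).trans ?_
        have : Real.exp (s.re + 1 / 2) ≤ Real.exp (2 * (A + 1) + 1 / 2) := Real.exp_le_exp.2 (by linarith)
        linarith
      | succ k ih =>
        intro s hs h1 h2
        by_cases hsA : A < s.re
        · rw [hψ s hsA]
          refine (hup0 s hsA).trans ?_
          have : Real.exp (s.re + 1 / 2) ≤ Real.exp (2 * (A + 1) + 1 / 2) := Real.exp_le_exp.2 (by linarith)
          linarith
        · push Not at hsA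
          have h3 := ih (2 * s) (by simpa using hs) (by simp; linarith)
            (by rw [pow_succ] at h2; simp; linarith)
          rw [← hfeq s hs] at h3
          have h4 : ‖ψ s ^ 2‖ - ‖c‖ ≤ ‖ψ s ^ 2 + c‖ := norm_sub_le_norm_add _ _
          rw [norm_pow] at h4
          unfold quadMap at h3
          by_contra hcon
          push Not at hcon
          nlinarith
    refine ⟨B, fun s hs hs1 => ?_⟩
    obtain ⟨k, hk'⟩ := hbig s.re hs A
    exact hk k s hs (by linarith) (hk' k le_rfl)
  · intro M
    refine ⟨max A M, fun s hs => ?_⟩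
    have h1 := hgrow s ((le_max_left _ _).trans_lt hs)
    have h2 := (le_max_right A M).trans_lt hs
    have h3 := Real.add_one_le_exp (s.re - 1 / 2)
    linarith

theorem Bott.omega {c : ℂ} {ψ : ℂ → ℂ} (h : Bott c ψ) {s : ℂ} (hs : 0 < s.re) :
    ψ s ∉ filledJuliaQuad c := by
  have : ψ s ∈ (filledJuliaQuad c)ᶜ := h.img ▸ mem_image_of_mem ψ hs
  exact this

theorem Bott.surj {c : ℂ} {ψ : ℂ → ℂ} (h : Bott c ψ) {z : ℂ} (hz : z ∉ filledJuliaQuad c) :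
    ∃ s : ℂ, 0 < s.re ∧ ψ s = z := by
  have : z ∈ ψ '' {s : ℂ | 0 < s.re} := by rw [h.img]; exact hz
  exact this

theorem Bott.isOpen_image {c : ℂ} {ψ : ℂ → ℂ} (h : Bott c ψ) {D : Set ℂ} (hD : IsOpen D)
    (hsub : D ⊆ {s : ℂ | 0 < s.re}) : IsOpen (ψ '' D) := by
  rcases (h.diff.analyticOnNhd (hp_open 0)).is_constant_or_isOpen (hp_convex 0).isPreconnected with
    ⟨w, hw⟩ | h1
  · exfalso
    have h1 := hw 1 (by simp)
    have h2 := hw 2 (by simp)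
    obtain ⟨m, hm⟩ := h.inj 1 2 (by simp) (by simp) (h1.trans h2.symm)
    have := congrArg Complex.re hm
    simp at this
  · exact h1 D hsub hD

theorem Bott.re_eq {c : ℂ} {ψ : ℂ → ℂ} (h : Bott c ψ) {s s' : ℂ} (hs : 0 < s.re) (hs' : 0 < s'.re)
    (he : ψ s = ψ s') : s.re = s'.re := by
  obtain ⟨m, hm⟩ := h.inj s s' hs hs' he
  rw [hm]; simp

theorem Bott.away {c : ℂ} {ψ : ℂ → ℂ} (h : Bott c ψ) {z : ℂ} (hz : z ∉ filledJuliaQuad c) :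
    ∃ δ > 0, ∃ V ∈ 𝓝 z, ∀ s : ℂ, 0 < s.re → ψ s ∈ V → δ ≤ s.re := by
  obtain ⟨s0, hs0, rfl⟩ := h.surj hz
  have hsub : {s : ℂ | s0.re / 2 < s.re} ⊆ {s : ℂ | 0 < s.re} := by
    intro s (hs : s0.re / 2 < s.re); change 0 < s.re; linarith
  refine ⟨s0.re / 2, by linarith, ψ '' {s : ℂ | s0.re / 2 < s.re},
    (h.isOpen_image (hp_open _) hsub).mem_nhds (mem_image_of_mem _ ?_), ?_⟩
  · change s0.re / 2 < s0.re; linarith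
  · rintro s hs ⟨s', hs', he⟩
    have := h.re_eq hs (hsub hs') he.symm
    have hs' : s0.re / 2 < s'.re := hs'
    linarith

theorem Bott.near {c : ℂ} {ψ : ℂ → ℂ} (h : Bott c ψ) {ε : ℝ} (hε : 0 < ε) :
    ∃ δ > 0, ∀ s : ℂ, 0 < s.re → s.re < δ → ∃ k ∈ filledJuliaQuad c, dist (ψ s) k < ε := by
  obtain ⟨B, hB⟩ := h.bdd
  let Q : Set ℂ := closedBall 0 B \ thickening ε (filledJuliaQuad c)
  have hQ : IsCompact Q := (isCompact_closedBall 0 B).diff isOpen_thickening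
  have hQO : ∀ z ∈ Q, z ∉ filledJuliaQuad c := fun z hz hzK =>
    hz.2 (self_subset_thickening hε _ hzK)
  have : ∃ δ > 0, ∀ s : ℂ, 0 < s.re → ψ s ∈ Q → δ ≤ s.re := by
    refine hQ.induction_on (p := fun T => ∃ δ > 0, ∀ s : ℂ, 0 < s.re → ψ s ∈ T → δ ≤ s.re)
      ⟨1, one_pos, fun s _ h => absurd h (notMem_empty _)⟩ ?_ ?_ ?_
    · rintro S T hST ⟨δ, hδ, hh⟩
      exact ⟨δ, hδ, fun s hs hm => hh s hs (hST hm)⟩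
    · rintro S T ⟨δ, hδ, hh⟩ ⟨δ', hδ', hh'⟩
      refine ⟨min δ δ', lt_min hδ hδ', fun s hs hm => ?_⟩
      rcases hm with hm | hm
      · exact (min_le_left _ _).trans (hh s hs hm)
      · exact (min_le_right _ _).trans (hh' s hs hm)
    · intro z hz
      obtain ⟨δ, hδ, V, hV, hh⟩ := h.away (hQO z hz)
      exact ⟨V, mem_nhdsWithin_of_mem_nhds hV, δ, hδ, hh⟩
  obtain ⟨δ, hδ, hh⟩ := this
  refine ⟨min δ 1, lt_min hδ one_pos, fun s hs hsδ => ?_⟩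
  by_contra hcon
  have h1 : ψ s ∈ Q := by
    refine ⟨by simpa using hB s hs (hsδ.le.trans (min_le_right _ _)), fun ht => hcon ?_⟩
    exact mem_thickening_iff.1 ht
  have := hh s hs h1
  linarith [min_le_left δ 1]

theorem Bott.lim_mem_J {c : ℂ} {ψ : ℂ → ℂ} (h : Bott c ψ) {ι : Type*} {l : Filter ι} [l.NeBot]
    {s : ι → ℂ} {z : ℂ} (h0 : ∀ᶠ i in l, 0 < (s i).re) (h1 : Tendsto (fun i => (s i).re) l (𝓝 0))
    (h2 : Tendsto (fun i => ψ (s i)) l (𝓝 z)) : z ∈ juliaQuad c := by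
  have hzK : z ∈ filledJuliaQuad c := by
    by_contra hz
    obtain ⟨δ, hδ, V, hV, hh⟩ := h.away hz
    obtain ⟨i, hi0, hi1, hi2⟩ := (h0.and ((h1.eventually_lt_const hδ).and (h2.eventually hV))).exists
    exact absurd (hh _ hi0 hi2) (not_le.2 hi1)
  have hcl : z ∈ closure (filledJuliaQuad c)ᶜ :=
    mem_closure_of_tendsto h2 (h0.mono fun i hi => h.omega hi)
  refine ⟨subset_closure hzK, fun hint => ?_⟩
  rw [closure_compl] at hcl
  exact hcl hint

theorem ball_hp {s : ℂ} : ball s s.re ⊆ {s : ℂ | 0 < s.re} := by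
  intro w hw
  rw [mem_ball, dist_eq_norm] at hw
  have := (abs_lt.1 ((Complex.abs_re_le_norm _).trans_lt hw)).1
  rw [Complex.sub_re] at this
  change 0 < w.re
  linarith

theorem Bott.deriv_small {c : ℂ} {ψ : ℂ → ℂ} (h : Bott c ψ) {ε : ℝ} (hε : 0 < ε) :
    ∃ δ > 0, ∀ s : ℂ, 0 < s.re → s.re < δ → ‖deriv ψ s‖ * s.re ≤ ε := by
  obtain ⟨δ, hδ, hh⟩ := h.near (ε := ε / 128) (by linarith)
  refine ⟨δ / 2, by linarith, fun s hs hsδ => ?_⟩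
  obtain ⟨z, hz, hb⟩ := bloch hs (h.diff.mono ball_hp)
  have hz0 : 0 < z.re := ball_hp hz
  have hz1 : z.re < δ := by
    rw [mem_ball, dist_eq_norm] at hz
    have := (abs_lt.1 ((Complex.abs_re_le_norm _).trans_lt hz)).2
    rw [Complex.sub_re] at this
    linarith
  obtain ⟨k, hk, hd⟩ := hh z hz0 hz1
  by_contra hcon
  push Not at hcon
  have : k ∈ ball (ψ z) (s.re * ‖deriv ψ s‖ / 128) := by
    rw [mem_ball, dist_comm]; linarith
  obtain ⟨w, hw, hwk⟩ := hb this
  exact h.omega (ball_hp hw) (by rw [hwk]; exact hk)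

theorem det_mul_complex (a : ℂ) :
    |((ContinuousLinearMap.toSpanSingleton ℂ a).restrictScalars ℝ : ℂ →L[ℝ] ℂ).det| = ‖a‖ ^ 2 := by
  simp [ContinuousLinearMap.det, LinearMap.det_restrictScalars,
      Algebra.norm_complex_eq, Complex.normSq_eq_norm_sq]

theorem area_lower {ψ : ℂ → ℂ} {D : Set ℂ} (hD : IsOpen D) (hd : DifferentiableOn ℂ ψ D)
    (hinj : InjOn ψ D) :
    ∫⁻ z in D, ENNReal.ofReal (‖deriv ψ z‖ ^ 2) = MeasureTheory.volume (ψ '' D) := by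
  rw [← MeasureTheory.lintegral_abs_det_fderiv_eq_addHaar_image MeasureTheory.volume
    (f' := fun z => (ContinuousLinearMap.toSpanSingleton ℂ (deriv ψ z)).restrictScalars ℝ)
    hD.measurableSet (fun z hz => ?_) hinj]
  · simp only [det_mul_complex]
  · have := (hd.differentiableAt (hD.mem_nhds hz)).hasDerivAt
    exact (this.hasFDerivAt.restrictScalars ℝ).hasFDerivWithinAt

theorem fubini_rect {G : ℂ → ENNReal} (hG : Measurable G) {ρ y0 : ℝ} {κ : ENNReal}
    (h : ∀ y ∈ Ioo y0 (y0 + ρ), κ ≤ ∫⁻ x in Ioo 0 ρ, G (x + y * Complex.I)) :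
    κ * ENNReal.ofReal ρ ≤
      ∫⁻ z in {z : ℂ | (0 < z.re ∧ z.re < ρ) ∧ (y0 < z.im ∧ z.im < y0 + ρ)}, G z := by
  have e1 : {z : ℂ | (0 < z.re ∧ z.re < ρ) ∧ (y0 < z.im ∧ z.im < y0 + ρ)} =
      Complex.measurableEquivRealProd ⁻¹' (Ioo 0 ρ ×ˢ Ioo y0 (y0 + ρ)) := by
    ext z; simp [Complex.measurableEquivRealProd]
  let g : ℝ × ℝ → ENNReal := fun q => G (q.1 + q.2 * Complex.I)
  have hg : Measurable g := hG.comp (by fun_prop)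
  have e2 : ∀ z, G z = g (Complex.measurableEquivRealProd z) := by
    intro z
    simp [g, Complex.measurableEquivRealProd]
  rw [e1]
  simp only [e2]
  rw [Complex.volume_preserving_equiv_real_prod.setLIntegral_comp_preimage
    (measurableSet_Ioo.prod measurableSet_Ioo) hg]
  rw [MeasureTheory.Measure.volume_eq_prod, ← MeasureTheory.Measure.prod_restrict,
    MeasureTheory.lintegral_prod_symm' _ hg]
  calc κ * ENNReal.ofReal ρ = ∫⁻ y in Ioo y0 (y0 + ρ), κ := by
        rw [MeasureTheory.setLIntegral_const, Real.volume_Ioo]; simp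
    _ ≤ _ := by
      refine MeasureTheory.setLIntegral_mono' measurableSet_Ioo h

theorem Bott.area_small {c : ℂ} {ψ : ℂ → ℂ} (h : Bott c ψ) {ε : ENNReal} (hε : 0 < ε) :
    ∃ ρ0 > 0, MeasureTheory.volume (ψ '' {s : ℂ | 0 < s.re ∧ s.re < ρ0}) < ε := by
  let S : ℕ → Set ℂ := fun n => ψ '' {s : ℂ | 0 < s.re ∧ s.re < 1 / ((n:ℝ) + 1)}
  have hopen : ∀ n, IsOpen (S n) := by
    intro n
    refine h.isOpen_image ?_ fun s hs => hs.1
    exact (hp_open 0).inter (isOpen_lt Complex.continuous_re continuous_const)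
  have hanti : Antitone S := by
    intro m n hmn
    refine image_mono fun s hs => ⟨hs.1, hs.2.trans_le ?_⟩
    exact one_div_le_one_div_of_le (by positivity) (by exact_mod_cast Nat.succ_le_succ hmn)
  obtain ⟨B, hB⟩ := h.bdd
  have hfin : MeasureTheory.volume (S 0) ≠ ⊤ := by
    have : S 0 ⊆ closedBall 0 B := by
      rintro _ ⟨s, hs, rfl⟩
      have h2 := hs.2
      simp at h2
      simpa using hB s hs.1 h2.le
    exact ((MeasureTheory.measure_mono this).trans_lt MeasureTheory.measure_closedBall_lt_top).ne
  have hempty : ⋂ n, S n = ∅ := by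
    rw [eq_empty_iff_forall_notMem]
    intro z hz
    rw [mem_iInter] at hz
    obtain ⟨s, hs, rfl⟩ := hz 0
    obtain ⟨n, hn⟩ := exists_nat_one_div_lt hs.1
    obtain ⟨s', hs', he⟩ := hz n
    have := h.re_eq hs'.1 hs.1 he
    linarith [hs'.2]
  have ht := MeasureTheory.tendsto_measure_iInter_atTop (μ := MeasureTheory.volume)
    (fun n => (hopen n).measurableSet.nullMeasurableSet) hanti ⟨0, hfin⟩
  rw [hempty, MeasureTheory.measure_empty] at ht
  obtain ⟨n, hn⟩ := (ht.eventually_lt_const hε).exists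
  exact ⟨1 / ((n:ℝ) + 1), by positivity, hn⟩

theorem land_of_energy {ψ : ℂ → ℂ} (hd : DifferentiableOn ℂ ψ {s : ℂ | 0 < s.re}) {ρ ε y : ℝ} (hρ : 0 < ρ)
    (hε : 0 < ε)
    (h : ∫⁻ x in Ioo 0 ρ, ENNReal.ofReal (‖deriv ψ (x + y * Complex.I)‖ ^ 2) ≤ ENNReal.ofReal (ε ^ 2 / ρ)) :
    ∃ a, Tendsto (fun x : ℝ => ψ (x + y * Complex.I)) (𝓝[>] 0) (𝓝 a) ∧
      ∀ x ∈ Ioo 0 ρ, ‖ψ (x + y * Complex.I) - a‖ ≤ ε := by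
  let D : ℝ → ℂ := fun x => deriv ψ (x + y * Complex.I)
  have hDm : Measurable D := (measurable_deriv ψ).comp (by fun_prop)
  have hre : ∀ x : ℝ, ((x:ℂ) + y * Complex.I).re = x := by intro x; simp
  have hder : ∀ x : ℝ, 0 < x → HasDerivAt (fun x : ℝ => ψ (x + y * Complex.I)) (D x) x := by
    intro x hx
    have h1 : HasDerivAt ψ (D x) (x + y * Complex.I) :=
      (hd.differentiableAt ((hp_open 0).mem_nhds (by change 0 < ((x:ℂ) + y * Complex.I).re; rwa [hre]))).hasDerivAt
    have h2 : HasDerivAt (fun x : ℝ => (x:ℂ) + y * Complex.I) 1 x :=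
      (Complex.ofRealCLM.hasDerivAt (x := x)).add_const (y * Complex.I)
    have := h1.comp x h2
    rwa [mul_one] at this
  have hsq : MeasureTheory.IntegrableOn (fun x => ‖D x‖ ^ 2) (Ioo 0 ρ) := by
    refine ⟨(hDm.norm.pow_const 2).aestronglyMeasurable, ?_⟩
    rw [MeasureTheory.hasFiniteIntegral_iff_ofReal (Eventually.of_forall fun x => by positivity)]
    exact h.trans_lt ENNReal.ofReal_lt_top
  have hsqI : ∫ x in Ioo 0 ρ, ‖D x‖ ^ 2 ≤ ε ^ 2 / ρ := by
    rw [MeasureTheory.integral_eq_lintegral_of_nonneg_ae (Eventually.of_forall fun x => by positivity)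
      (hDm.norm.pow_const 2).aestronglyMeasurable]
    exact ENNReal.toReal_le_of_le_ofReal (by positivity) h
  have hpt : ∀ x, ‖D x‖ ≤ ε / (2 * ρ) + ρ / (2 * ε) * ‖D x‖ ^ 2 := by
    intro x
    have : 0 ≤ ρ / (2 * ε) * (‖D x‖ - ε / ρ) ^ 2 := by positivity
    have e : ρ / (2 * ε) * (‖D x‖ - ε / ρ) ^ 2 = ε / (2 * ρ) + ρ / (2 * ε) * ‖D x‖ ^ 2 - ‖D x‖ := by
      field_simp; ring
    linarith
  have hdom : MeasureTheory.IntegrableOn (fun x => ε / (2 * ρ) + ρ / (2 * ε) * ‖D x‖ ^ 2) (Ioo 0 ρ) := by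
    refine MeasureTheory.Integrable.add ?_ (hsq.const_mul _)
    exact MeasureTheory.integrableOn_const (by simp)
  have hDi : MeasureTheory.IntegrableOn D (Ioo 0 ρ) :=
    MeasureTheory.Integrable.mono' hdom hDm.aestronglyMeasurable (Eventually.of_forall hpt)
  have hDn : ∫ x in Ioo 0 ρ, ‖D x‖ ≤ ε := by
    refine (MeasureTheory.integral_mono hDi.norm hdom hpt).trans ?_
    have hci : MeasureTheory.Integrable (fun _ : ℝ => ε / (2 * ρ))
        (MeasureTheory.volume.restrict (Ioo 0 ρ)) := MeasureTheory.integrableOn_const (by simp)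
    rw [MeasureTheory.integral_add hci (hsq.const_mul _),
      MeasureTheory.integral_const_mul, MeasureTheory.setIntegral_const]
    have e1 : MeasureTheory.volume.real (Ioo 0 ρ) = ρ := by simp [hρ.le]
    rw [e1, smul_eq_mul]
    calc ρ * (ε / (2 * ρ)) + ρ / (2 * ε) * ∫ x in Ioo 0 ρ, ‖D x‖ ^ 2
        ≤ ρ * (ε / (2 * ρ)) + ρ / (2 * ε) * (ε ^ 2 / ρ) := by gcongr
      _ = ε := by field_simp; ring
  have hII : IntervalIntegrable D MeasureTheory.volume 0 ρ := by
    rw [intervalIntegrable_iff_integrableOn_Ioo_of_le hρ.le]; exact hDi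
  have hcont := intervalIntegral.continuousOn_primitive_interval' hII (a := 0) left_mem_uIcc
  rw [uIcc_of_le hρ.le] at hcont
  have htend : Tendsto (fun x => ∫ t in (0:ℝ)..x, D t) (𝓝[>] 0) (𝓝 0) := by
    have := (hcont 0 ⟨le_rfl, hρ.le⟩).tendsto
    rw [intervalIntegral.integral_same] at this
    refine this.mono_left ?_
    rw [nhdsWithin_le_iff]
    exact mem_of_superset (Ioo_mem_nhdsGT hρ) Ioo_subset_Icc_self
  have hII' : ∀ a b, a ∈ Icc 0 ρ → b ∈ Icc 0 ρ → IntervalIntegrable D MeasureTheory.volume a b := by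
    intro a b ha hb
    refine hII.mono_set ?_
    rw [uIcc_of_le hρ.le]
    exact uIcc_subset_Icc ha hb
  have hconst : ∀ x ∈ Ioo 0 ρ, ψ (x + y * Complex.I) - ∫ t in (0:ℝ)..x, D t =
      ψ ((ρ / 2 : ℝ) + y * Complex.I) - ∫ t in (0:ℝ)..(ρ / 2), D t := by
    intro x hx
    have hx' : x ∈ Icc 0 ρ := ⟨hx.1.le, hx.2.le⟩
    have hr' : ρ / 2 ∈ Icc 0 ρ := ⟨by linarith, by linarith⟩
    have h0' : (0:ℝ) ∈ Icc 0 ρ := ⟨le_rfl, hρ.le⟩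
    have h1 := intervalIntegral.integral_eq_sub_of_hasDerivAt (a := ρ / 2) (b := x)
      (f := fun x : ℝ => ψ (x + y * Complex.I)) (f' := D) (fun t ht => hder t (by
        have h2 : min (ρ / 2) x ≤ t := ht.1
        exact (lt_min (by linarith) hx.1).trans_le h2)) (hII' _ _ hr' hx')
    have h2 := intervalIntegral.integral_add_adjacent_intervals (hII' _ _ h0' hr') (hII' _ _ hr' hx')
    linear_combination -h1 + h2
  refine ⟨ψ ((ρ / 2 : ℝ) + y * Complex.I) - ∫ t in (0:ℝ)..(ρ / 2), D t, ?_, ?_⟩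
  · have := htend.const_add (ψ ((ρ / 2 : ℝ) + y * Complex.I) - ∫ t in (0:ℝ)..(ρ / 2), D t)
    rw [add_zero] at this
    refine this.congr' ?_
    filter_upwards [Ioo_mem_nhdsGT hρ] with x hx
    rw [← hconst x hx]; ring
  · intro x hx
    rw [← hconst x hx, sub_sub_cancel]
    rw [intervalIntegral.integral_of_le hx.1.le]
    refine (MeasureTheory.norm_integral_le_integral_norm _).trans (le_trans ?_ hDn)
    refine MeasureTheory.setIntegral_mono_set hDi.norm (Eventually.of_forall fun x => norm_nonneg _) ?_
    exact Eventually.of_forall (Ioc_subset_Ioo_right hx.2)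

theorem Bott.len {c : ℂ} {ψ : ℂ → ℂ} (h : Bott c ψ) {ε : ℝ} (hε : 0 < ε) :
    ∃ ρ0 > 0, ∀ ρ, 0 < ρ → ρ ≤ ρ0 → ∀ y0 : ℝ, ∃ y ∈ Ioo y0 (y0 + ρ), ∃ a ∈ juliaQuad c,
      Tendsto (fun x : ℝ => ψ (x + y * Complex.I)) (𝓝[>] 0) (𝓝 a) ∧
      ∀ x ∈ Ioo 0 ρ, ‖ψ (x + y * Complex.I) - a‖ ≤ ε := by
  obtain ⟨ρ0, hρ0, hA⟩ := h.area_small (ε := ENNReal.ofReal (ε ^ 2)) (by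
    rw [ENNReal.ofReal_pos]; positivity)
  refine ⟨min ρ0 1, lt_min hρ0 one_pos, fun ρ hρ hρ1 y0 => ?_⟩
  have hex : ∃ y ∈ Ioo y0 (y0 + ρ),
      ∫⁻ x in Ioo 0 ρ, ENNReal.ofReal (‖deriv ψ (x + y * Complex.I)‖ ^ 2) ≤ ENNReal.ofReal (ε ^ 2 / ρ) := by
    by_contra hcon
    push Not at hcon
    have h1 := fubini_rect (G := fun z => ENNReal.ofReal (‖deriv ψ z‖ ^ 2))
      ((measurable_deriv ψ).norm.pow_const 2).ennreal_ofReal (fun y hy => (hcon y hy).le)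
    rw [← ENNReal.ofReal_mul (by positivity), div_mul_cancel₀ _ hρ.ne'] at h1
    have hsub : {z : ℂ | (0 < z.re ∧ z.re < ρ) ∧ (y0 < z.im ∧ z.im < y0 + ρ)} ⊆ {s : ℂ | 0 < s.re} :=
      fun z hz => hz.1.1
    have hopen : IsOpen {z : ℂ | (0 < z.re ∧ z.re < ρ) ∧ (y0 < z.im ∧ z.im < y0 + ρ)} :=
      ((hp_open 0).inter (isOpen_lt Complex.continuous_re continuous_const)).inter
        ((isOpen_lt continuous_const Complex.continuous_im).inter
          (isOpen_lt Complex.continuous_im continuous_const))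
    rw [area_lower hopen (h.diff.mono hsub) ?_] at h1
    · refine absurd (h1.trans (MeasureTheory.measure_mono (image_mono ?_))) (not_le.2 hA)
      intro z hz
      exact ⟨hz.1.1, hz.1.2.trans_le (hρ1.trans (min_le_left _ _))⟩
    · intro s hs s' hs' he
      obtain ⟨m, hm⟩ := h.inj s s' hs.1.1 hs'.1.1 he
      have him := congrArg Complex.im hm
      simp at him
      have hρ1' := hρ1.trans (min_le_right _ _)
      have hpi := Real.pi_gt_three
      have h1 := hs.2
      have h2 := hs'.2
      have hm0 : m = 0 := by
        by_contra hm0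
        rcases lt_or_gt_of_ne hm0 with hl | hl
        · have : (m:ℝ) ≤ -1 := by exact_mod_cast Int.le_sub_one_of_lt hl
          nlinarith
        · have : (1:ℝ) ≤ m := by exact_mod_cast hl
          nlinarith
      rw [hm, hm0]; simp
  obtain ⟨y, hy, hen⟩ := hex
  obtain ⟨a, ha, hb⟩ := land_of_energy h.diff hρ hε hen
  refine ⟨y, hy, a, ?_, ha, hb⟩
  refine h.lim_mem_J (s := fun x : ℝ => (x:ℂ) + y * Complex.I) ?_ ?_ ha
  · filter_upwards [self_mem_nhdsWithin] with x hx
    simpa using hx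
  · simp only [Complex.add_re, Complex.ofReal_re, Complex.mul_re, Complex.I_re, mul_zero,
      Complex.ofReal_im, Complex.I_im, mul_one, sub_self, add_zero]
    exact tendsto_id.mono_left nhdsWithin_le_nhds

theorem J_lc {c : ℂ} [LocallyConnectedSpace (juliaQuad c)] {ε : ℝ} (hε : 0 < ε) :
    ∃ η > 0, ∀ a ∈ juliaQuad c, ∀ b ∈ juliaQuad c, dist a b < η →
      ∃ C ⊆ juliaQuad c, IsClosed C ∧ IsPreconnected C ∧ a ∈ C ∧ b ∈ C ∧ C ⊆ closedBall a ε := by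
  have : CompactSpace (juliaQuad c) := isCompact_iff_compactSpace.1 (J_compact c)
  have h1 := locallyConnectedSpace_iff_subsets_isOpen_isConnected.1
    (inferInstance : LocallyConnectedSpace (juliaQuad c))
  choose V hV1 hV2 hV3 hV4 using fun x : juliaQuad c => h1 x (ball x (ε / 2)) (ball_mem_nhds x (by linarith))
  obtain ⟨η, hη, hL⟩ := lebesgue_number_lemma_of_metric (isCompact_univ (X := juliaQuad c)) hV2
    (fun x _ => mem_iUnion.2 ⟨x, hV3 x⟩)
  refine ⟨η, hη, fun a ha b hb hab => ?_⟩
  obtain ⟨x, hx⟩ := hL ⟨a, ha⟩ (mem_univ _)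
  have haV : (⟨a, ha⟩ : juliaQuad c) ∈ V x := hx (mem_ball_self hη)
  have hbV : (⟨b, hb⟩ : juliaQuad c) ∈ V x := hx (by rw [mem_ball, dist_comm]; exact hab)
  refine ⟨closure (Subtype.val '' V x), ?_, isClosed_closure, ?_, ?_, ?_, ?_⟩
  · refine closure_minimal ?_ (J_compact c).isClosed
    rintro _ ⟨y, -, rfl⟩; exact y.2
  · exact ((hV4 x).isPreconnected.image _ continuous_subtype_val.continuousOn).closure
  · exact subset_closure ⟨_, haV, rfl⟩
  · exact subset_closure ⟨_, hbV, rfl⟩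
  · refine closure_minimal ?_ isClosed_closedBall
    rintro _ ⟨y, hy, rfl⟩
    have e1 := hV1 x hy
    have e2 := hV1 x haV
    rw [mem_ball] at e1 e2
    have := dist_triangle_right y ⟨a, ha⟩ x
    rw [mem_closedBall]
    change dist y ⟨a, ha⟩ ≤ ε
    linarith

theorem trap {J A C V : Set ℂ} {a z1 z2 : ℂ} {ε B : ℝ} (hε : 0 ≤ ε) (hJ : IsClosed J) (hA : IsClosed A)
    (hfr : frontier V ⊆ J ∪ A) (hVB : V ⊆ closedBall 0 B) (h1V : z1 ∈ V) (h2 : z2 ∉ V)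
    (hJA : A ∩ J ⊆ C) (hCA : C ⊆ A) (hCJ : C ⊆ J) (hC : IsPreconnected C) (hAb : A ⊆ closedBall a ε)
    (h1b : z1 ∉ closedBall a ε) (h2b : z2 ∉ closedBall a ε) (hj : JoinedIn Jᶜ z2 z1) : False := by
  classical
  obtain ⟨u1, hu1, hu1e⟩ := path_log hj
  rw [mem_closedBall, not_le] at h1b h2b
  have e1 : z1 ∉ ball a (min (dist z1 a) (dist z2 a)) := by
    rw [mem_ball, not_lt]; exact min_le_left _ _
  have e2 : z2 ∉ ball a (min (dist z1 a) (dist z2 a)) := by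
    rw [mem_ball, not_lt]; exact min_le_right _ _
  have hpos : ε < min (dist z1 a) (dist z2 a) := lt_min h1b h2b
  set U := ball a (min (dist z1 a) (dist z2 a))
  have hAU : A ⊆ U := hAb.trans (closedBall_subset_ball hpos)
  have n1 : ∀ z ∈ U, z - z1 ≠ 0 := fun z hz h => e1 (by rw [← sub_eq_zero.1 h]; exact hz)
  have n2 : ∀ z ∈ U, z - z2 ≠ 0 := fun z hz h => e2 (by rw [← sub_eq_zero.1 h]; exact hz)
  obtain ⟨u2, hu2, hu2e⟩ := holo_log (U := U) (g := fun z => (z - z1) / (z - z2)) (convex_ball _ _)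
    isOpen_ball ⟨a, mem_ball_self (by linarith)⟩
    (by
      apply DifferentiableOn.div
      · fun_prop
      · fun_prop
      · exact n2) (fun z hz => div_ne_zero (n1 z hz) (n2 z hz))
  obtain ⟨k, hk, hkC⟩ := exp_diff_const hC (hu1.mono hCJ) (hu2.continuousOn.mono (hCA.trans hAU)) (by
    intro z hz
    rw [hu2e z (hAU (hCA hz)), eq_div_iff (n2 z (hAU (hCA hz))), hu1e z (hCJ hz)])
  let w : ℂ → ℂ := fun z => if z ∈ J then u1 z else u2 z + k
  have hwJ : EqOn w u1 J := fun z hz => by simp [w, hz]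
  have hwA : EqOn w (fun z => u2 z + k) A := fun z hz => by
    by_cases hzJ : z ∈ J
    · simp only [w, hzJ, if_true]; exact hkC z (hJA ⟨hz, hzJ⟩)
    · simp [w, hzJ]
  have hw : ContinuousOn w (J ∪ A) :=
    ((continuousOn_congr hwJ).2 hu1).union_of_isClosed
      ((continuousOn_congr hwA).2 ((hu2.continuousOn.mono hAU).add continuousOn_const)) hJ hA
  have hwe : ∀ z ∈ J ∪ A, Complex.exp (w z) * (z - z2) = z - z1 := by
    rintro z (hz | hz)
    · rw [hwJ hz, hu1e z hz]
    · rw [hwA hz, Complex.exp_add, hk, mul_one, hu2e z (hAU hz), div_mul_cancel₀ _ (n2 z (hAU hz))]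
  obtain ⟨ũ, hũ⟩ := ContinuousMap.exists_restrict_eq (hJ.union hA)
    ⟨(J ∪ A).domRestrict w, continuousOn_iff_continuous_domRestrict.1 hw⟩
  have hũw : ∀ z ∈ J ∪ A, ũ z = w z := fun z hz => by
    have := congrArg (fun f => f ⟨z, hz⟩) hũ
    simpa using this
  refine no_cont_ext z1 (B + 1) (V.piecewise (fun z => Complex.exp (ũ z) * (z - z2)) (fun z => z - z1)) ?_ ?_ ?_
  · refine Continuous.piecewise ?_ ?_ ?_
    · intro z hz
      rw [hũw z (hfr hz), hwe z (hfr hz)]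
    · have := ũ.continuous
      fun_prop
    · fun_prop
  · intro z
    by_cases hz : z ∈ V
    · rw [piecewise_eq_of_mem _ _ _ hz]
      refine mul_ne_zero (Complex.exp_ne_zero _) fun h => h2 ?_
      rw [← sub_eq_zero.1 h]; exact hz
    · rw [piecewise_eq_of_notMem _ _ _ hz]
      intro h
      apply hz; rw [sub_eq_zero.1 h]; exact h1V
  · intro z hz
    refine piecewise_eq_of_notMem _ _ _ fun hzV => ?_
    have := hVB hzV
    rw [mem_closedBall_zero_iff] at this
    linarith

theorem ray_cont {ψ : ℂ → ℂ} (hd : DifferentiableOn ℂ ψ {s : ℂ | 0 < s.re}) {y x1 : ℝ} {a : ℂ}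
    (hta : Tendsto (fun x : ℝ => ψ (x + y * Complex.I)) (𝓝[>] 0) (𝓝 a)) :
    ContinuousOn (Function.update (fun x : ℝ => ψ (x + y * Complex.I)) 0 a) (Icc 0 x1) := by
  rw [continuousOn_update_iff]
  have e : Icc 0 x1 \ {0} = Ioc 0 x1 := by ext x; simp [lt_iff_le_and_ne]
  rw [e]
  constructor
  · refine hd.continuousOn.comp (by fun_prop) ?_
    intro x hx; simpa using hx.1
  · intro _
    exact hta.mono_left (nhdsWithin_mono _ fun x hx => hx.1)

theorem Bott.rect_trap {c : ℂ} {ψ : ℂ → ℂ} (h : Bott c ψ) {x1 y1 y2 ε : ℝ} {a b : ℂ} {C : Set ℂ}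
    (hx1 : 0 < x1) (hx1' : x1 ≤ 1) (hy : y1 < y2) (hε : 0 ≤ ε)
    (hta : Tendsto (fun x : ℝ => ψ (x + y1 * Complex.I)) (𝓝[>] 0) (𝓝 a))
    (htb : Tendsto (fun x : ℝ => ψ (x + y2 * Complex.I)) (𝓝[>] 0) (𝓝 b))
    (hCJ : C ⊆ juliaQuad c) (hCc : IsClosed C) (hC : IsPreconnected C) (haC : a ∈ C) (hbC : b ∈ C)
    (hCb : C ⊆ closedBall a ε)
    (hedge : ∀ s : ℂ, 0 < s.re → s.re ≤ x1 → y1 ≤ s.im → s.im ≤ y2 →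
      (s.re = x1 ∨ s.im = y1 ∨ s.im = y2) → ψ s ∈ closedBall a ε) :
    ∀ s : ℂ, 0 < s.re → s.re < x1 → y1 < s.im → s.im < y2 → ψ s ∈ closedBall a ε := by
  intro s h0 h1 h2 h3
  by_contra hs
  obtain ⟨B, hB⟩ := h.bdd
  set D : Set ℂ := {s | 0 < s.re ∧ s.re < x1 ∧ y1 < s.im ∧ s.im < y2} with hDdef
  have hDo : IsOpen D := by
    refine (isOpen_lt continuous_const Complex.continuous_re).inter
      ((isOpen_lt Complex.continuous_re continuous_const).inter
      ((isOpen_lt continuous_const Complex.continuous_im).inter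
      (isOpen_lt Complex.continuous_im continuous_const)))
  have hVo : IsOpen (ψ '' D) := h.isOpen_image hDo fun s hs => hs.1
  set g1 := Function.update (fun x : ℝ => ψ (x + y1 * Complex.I)) 0 a with hg1
  set g2 := Function.update (fun x : ℝ => ψ (x + y2 * Complex.I)) 0 b with hg2
  have hG1 : ContinuousOn g1 (Icc 0 x1) := ray_cont h.diff hta
  have hG2 : ContinuousOn g2 (Icc 0 x1) := ray_cont h.diff htb
  have hG3 : ContinuousOn (fun y : ℝ => ψ (x1 + y * Complex.I)) (Icc y1 y2) := by
    refine h.diff.continuousOn.comp (by fun_prop) ?_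
    intro y _; simpa using hx1
  set A : Set ℂ := (g1 '' Icc 0 x1 ∪ g2 '' Icc 0 x1) ∪ ((fun y : ℝ => ψ (x1 + y * Complex.I)) '' Icc y1 y2 ∪ C)
    with hAdef
  have hAc : IsClosed A :=
    (((isCompact_Icc.image_of_continuousOn hG1).isClosed).union
      (isCompact_Icc.image_of_continuousOn hG2).isClosed).union
      ((isCompact_Icc.image_of_continuousOn hG3).isClosed.union hCc)
  have hAmem : ∀ z ∈ A, z ∈ C ∨ ∃ s : ℂ, ψ s = z ∧ 0 < s.re ∧ s.re ≤ x1 ∧ y1 ≤ s.im ∧ s.im ≤ y2 ∧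
      (s.re = x1 ∨ s.im = y1 ∨ s.im = y2) := by
    rintro z ((⟨x, hx, rfl⟩ | ⟨x, hx, rfl⟩) | (⟨y, hy', rfl⟩ | hz))
    · rcases hx.1.eq_or_lt with rfl | hx0
      · left; simpa [hg1] using haC
      · right; refine ⟨x + y1 * Complex.I, ?_, ?_⟩
        · simp [hg1, hx0.ne']
        · simpa [hx0, hx.2] using hy.le
    · rcases hx.1.eq_or_lt with rfl | hx0
      · left; simpa [hg2] using hbC
      · right; refine ⟨x + y2 * Complex.I, ?_, ?_⟩
        · simp [hg2, hx0.ne']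
        · simpa [hx0, hx.2] using hy.le
    · right; exact ⟨x1 + y * Complex.I, rfl, by simpa [hx1] using hy'⟩
    · exact Or.inl hz
  have hmemA : ∀ s : ℂ, 0 < s.re → s.re ≤ x1 → y1 ≤ s.im → s.im ≤ y2 →
      (s.re = x1 ∨ s.im = y1 ∨ s.im = y2) → ψ s ∈ A := by
    rintro s h0 h1 h2 h3 (h4 | h4 | h4)
    · refine Or.inr (Or.inl ⟨s.im, ⟨h2, h3⟩, ?_⟩)
      simp only [← h4, Complex.re_add_im]
    · refine Or.inl (Or.inl ⟨s.re, ⟨h0.le, h1⟩, ?_⟩)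
      simp only [hg1, Function.update_of_ne h0.ne', ← h4, Complex.re_add_im]
    · refine Or.inl (Or.inr ⟨s.re, ⟨h0.le, h1⟩, ?_⟩)
      simp only [hg2, Function.update_of_ne h0.ne', ← h4, Complex.re_add_im]
  have hVB : ψ '' D ⊆ closedBall 0 B := by
    rintro _ ⟨s, hs, rfl⟩
    rw [mem_closedBall_zero_iff]; exact hB s hs.1 (hs.2.1.le.trans hx1')
  obtain ⟨M, hM⟩ : ∃ M : ℝ, max (max B (‖a‖ + ε)) (‖c‖ + 3) < M := exists_gt _
  rw [max_lt_iff, max_lt_iff] at hM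
  have hM0 : 0 < M := by linarith [norm_nonneg c]
  have hMn : ‖(M : ℂ)‖ = M := by simp [hM0.le]
  obtain ⟨s2, hs2, hs2e⟩ := h.surj (z := (M : ℂ)) (fun hm => by have := K_lt hm; rw [hMn] at this; linarith)
  refine trap (J := juliaQuad c) (A := A) (C := C) (V := ψ '' D) (a := a) (z1 := ψ s) (z2 := ψ s2)
    (ε := ε) (B := B) hε isClosed_frontier hAc ?_ hVB ⟨s, ⟨h0, h1, h2, h3⟩, rfl⟩ ?_ ?_ ?_ hCJ hC ?_ hs ?_ ?_
  · intro z hz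
    rw [hVo.frontier_eq] at hz
    obtain ⟨v, hv, hvz⟩ := mem_closure_iff_seq_limit.1 hz.1
    choose t ht hte using hv
    have hcpt : IsCompact (Icc 0 x1 ×ℂ Icc y1 y2) := isCompact_Icc.reProdIm isCompact_Icc
    obtain ⟨t0, ht0, φ, hφ, hlim⟩ := hcpt.tendsto_subseq (x := t)
      (fun n => ⟨⟨(ht n).1.le, (ht n).2.1.le⟩, ⟨(ht n).2.2.1.le, (ht n).2.2.2.le⟩⟩)
    have hlim2 : Tendsto (fun n => ψ (t (φ n))) atTop (𝓝 z) := by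
      have := hvz.comp hφ.tendsto_atTop
      refine this.congr fun n => ?_
      exact (hte (φ n)).symm
    obtain ⟨⟨q1, q2⟩, q3, q4⟩ := ht0
    rcases q1.eq_or_lt with q0 | q0
    · left
      refine h.lim_mem_J (l := atTop) (s := fun n => t (φ n)) (Eventually.of_forall fun n => (ht _).1) ?_ hlim2
      rw [q0]; exact (Complex.continuous_re.tendsto t0).comp hlim
    · right
      have hc : ContinuousAt ψ t0 := h.diff.continuousOn.continuousAt ((hp_open 0).mem_nhds q0)
      have hzt : z = ψ t0 := tendsto_nhds_unique hlim2 (hc.tendsto.comp hlim)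
      rw [hzt]
      refine hmemA t0 q0 q2 q3 q4 ?_
      by_contra hcon
      push Not at hcon
      exact hz.2 ⟨t0, ⟨q0, lt_of_le_of_ne q2 hcon.1, lt_of_le_of_ne q3 (Ne.symm hcon.2.1),
        lt_of_le_of_ne q4 hcon.2.2⟩, hzt.symm⟩
  · intro hm
    have := hVB hm
    rw [hs2e, mem_closedBall_zero_iff, hMn] at this
    linarith
  · rintro z ⟨hzA, hzJ⟩
    rcases hAmem z hzA with h' | ⟨t, rfl, ht, -⟩
    · exact h'
    · exact absurd (J_sub_K c hzJ) (h.omega ht)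
  · intro z hz; exact Or.inr (Or.inr hz)
  · intro z hz
    rcases hAmem z hz with h' | ⟨t, rfl, p0, p1, p2, p3, p4⟩
    · exact hCb h'
    · exact hedge t p0 p1 p2 p3 p4
  · intro hm
    rw [hs2e, mem_closedBall, dist_eq_norm] at hm
    have := norm_le_norm_add_norm_sub' (M : ℂ) a
    rw [hMn] at this
    linarith
  · have hp : IsPathConnected (ψ '' {s : ℂ | 0 < s.re}) :=
      ((hp_convex 0).isPathConnected (hp_ne 0)).image' h.diff.continuousOn
    refine (hp.joinedIn _ ⟨s2, hs2, rfl⟩ _ ⟨s, h0, rfl⟩).mono ?_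
    rintro _ ⟨t, ht, rfl⟩ hJ
    exact h.omega ht (J_sub_K c hJ)

theorem Bott.UC {c : ℂ} {ψ : ℂ → ℂ} (h : Bott c ψ) [LocallyConnectedSpace (juliaQuad c)] {ε : ℝ}
    (hε : 0 < ε) : ∃ ρ > 0, ∀ s s' : ℂ, 0 < s.re → s.re < ρ → 0 < s'.re → s'.re < ρ →
      |s.im - s'.im| < ρ → ‖ψ s - ψ s'‖ < ε := by
  obtain ⟨η, hη, hJ⟩ := J_lc (c := c) (ε := ε / 3) (by linarith)
  obtain ⟨e, he, he1, he2⟩ : ∃ e > 0, 20 * e ≤ ε / 3 ∧ 20 * e ≤ η := by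
    refine ⟨min (ε / 3) η / 20, by positivity, ?_, ?_⟩
    · linarith [min_le_left (ε / 3) η]
    · linarith [min_le_right (ε / 3) η]
  obtain ⟨ρ0, hρ0, hlen⟩ := h.len he
  obtain ⟨δ, hδ, hder⟩ := h.deriv_small he
  obtain ⟨x, hx, hxρ, hxδ, hx1⟩ : ∃ x > 0, 2 * x ≤ ρ0 ∧ 2 * x ≤ δ ∧ 2 * x ≤ 1 := by
    refine ⟨min ρ0 (min δ 1) / 2, by positivity, ?_, ?_, ?_⟩
    · linarith [min_le_left ρ0 (min δ 1)]
    · linarith [min_le_right ρ0 (min δ 1), min_le_left δ 1]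
    · linarith [min_le_right ρ0 (min δ 1), min_le_right δ 1]
  refine ⟨x, hx, fun s s' h0 h1 h0' h1' him => ?_⟩
  obtain ⟨y1, hy1, a, ha, hta, hla⟩ := hlen (2 * x) (by linarith) hxρ (min s.im s'.im - 2 * x)
  obtain ⟨y2, hy2, b, hb, htb, hlb⟩ := hlen (2 * x) (by linarith) hxρ (max s.im s'.im)
  have hm1 : max s.im s'.im < min s.im s'.im + x := by
    rw [abs_lt] at him
    rcases le_total s.im s'.im with h' | h'
    · rw [max_eq_right h', min_eq_left h']; linarith
    · rw [max_eq_left h', min_eq_right h']; linarith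
  have q1 := min_le_left s.im s'.im
  have q2 := min_le_right s.im s'.im
  have q3 := le_max_left s.im s'.im
  have q4 := le_max_right s.im s'.im
  obtain ⟨hy1a, hy1b⟩ := hy1
  obtain ⟨hy2a, hy2b⟩ := hy2
  have hright : ∀ y, y1 ≤ y → y ≤ y2 → ‖ψ (x + y * Complex.I) - ψ (x + y1 * Complex.I)‖ ≤ 5 * e := by
    intro y k1 k2
    have := (convex_Icc y1 y2).norm_image_sub_le_of_norm_hasDerivWithin_le (𝕜 := ℝ)
      (f := fun y : ℝ => ψ (x + y * Complex.I))
      (f' := fun y : ℝ => deriv ψ (x + y * Complex.I) * Complex.I) (C := e / x) (x := y1) (y := y) ?_ ?_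
      ⟨le_rfl, by linarith⟩ ⟨k1, k2⟩
    · refine this.trans ?_
      rw [Real.norm_of_nonneg (by linarith)]
      calc e / x * (y - y1) ≤ e / x * (5 * x) := by gcongr; linarith
        _ = 5 * e := by field_simp
    · intro t _
      have hd : HasDerivAt ψ (deriv ψ (x + t * Complex.I)) (x + t * Complex.I) :=
        (h.diff.differentiableAt ((hp_open 0).mem_nhds (by simpa using hx))).hasDerivAt
      have h2 : HasDerivAt (fun y : ℝ => (x : ℂ) + y * Complex.I) Complex.I t := by
        have := ((Complex.ofRealCLM.hasDerivAt (x := t)).mul_const Complex.I).const_add (x : ℂ)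
        simpa using this
      exact (hd.comp t h2).hasDerivWithinAt
    · intro t _
      rw [norm_mul, Complex.norm_I, mul_one, le_div_iff₀ hx]
      have := hder (x + t * Complex.I) (by simpa using hx) (by simp; linarith)
      simpa using this
  have c1 := hla x ⟨hx, by linarith⟩
  have c2 := hlb x ⟨hx, by linarith⟩
  have c3 := hright y2 (by linarith) le_rfl
  have hab : ‖b - a‖ ≤ 7 * e := by
    have : b - a = -(ψ (x + y2 * Complex.I) - b) + (ψ (x + y2 * Complex.I) - ψ (x + y1 * Complex.I)) +
      (ψ (x + y1 * Complex.I) - a) := by ring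
    rw [this]
    refine (norm_add₃_le).trans ?_
    rw [norm_neg]; linarith
  obtain ⟨C, hCJ, hCc, hC, haC, hbC, hCb⟩ := hJ a ha b hb (by rw [dist_comm, dist_eq_norm]; linarith)
  have key := h.rect_trap hx (by linarith) (by linarith) (by linarith : 0 ≤ ε / 3) hta htb hCJ hCc hC haC hbC hCb (by
    intro t t0 t1 t2 t3 t4
    rw [mem_closedBall, dist_eq_norm]
    rcases t4 with t4 | t4 | t4
    · have := hright t.im t2 t3
      rw [← t4, Complex.re_add_im] at this
      rw [← t4] at c1
      have e3 : ψ t - a = (ψ t - ψ (t.re + y1 * Complex.I)) + (ψ (t.re + y1 * Complex.I) - a) := by ring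
      rw [e3]
      refine (norm_add_le _ _).trans ?_
      linarith
    · have := hla t.re ⟨t0, by linarith⟩
      rw [← t4, Complex.re_add_im] at this
      linarith
    · have := hlb t.re ⟨t0, by linarith⟩
      rw [← t4, Complex.re_add_im] at this
      have e3 : ψ t - a = (ψ t - b) + (b - a) := by ring
      rw [e3]
      refine (norm_add_le _ _).trans ?_
      linarith)
  have r1 := key s h0 h1 (by linarith) (by linarith)
  have r2 := key s' h0' h1' (by linarith) (by linarith)
  rw [mem_closedBall, dist_eq_norm] at r1 r2
  have e3 : ψ s - ψ s' = (ψ s - a) - (ψ s' - a) := by ring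
  rw [e3]
  refine (norm_sub_le _ _).trans_lt ?_
  linarith

theorem unit_rec {l : ℂ} (hl : ‖l‖ = 1) {ε : ℝ} (hε : 0 < ε) : ∃ j : ℕ, 0 < j ∧ ‖l ^ j - 1‖ < ε := by
  obtain ⟨a, -, φ, hφ, hlim⟩ := (isCompact_closedBall (0:ℂ) 1).tendsto_subseq (x := fun k : ℕ => l ^ k)
    (fun k => by simp [hl])
  obtain ⟨M, hM⟩ := Metric.cauchySeq_iff.1 hlim.cauchySeq ε hε
  have h1 := hM (M + 1) (by omega) M le_rfl
  have hlt : φ M < φ (M + 1) := hφ (by omega)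
  refine ⟨φ (M + 1) - φ M, by omega, ?_⟩
  rw [dist_eq_norm] at h1
  have e : l ^ φ (M + 1) - l ^ φ M = l ^ φ M * (l ^ (φ (M + 1) - φ M) - 1) := by
    rw [mul_sub, ← pow_add, mul_one]; congr 2; omega
  simp only [Function.comp] at h1
  rw [e, norm_mul, norm_pow, hl, one_pow, one_mul] at h1
  exact h1

theorem snail {φ Φ : ℂ → ℂ} {l : ℂ} {N : ℝ} (hN : 2 ≤ N) (hd : DifferentiableOn ℂ φ {s : ℂ | 0 < s.re})
    (h0 : ∀ s : ℂ, 0 < s.re → φ s ≠ 0) (hΦ0 : Φ 0 = 0) (hΦ : HasDerivAt Φ l 0) (hl : ‖l‖ = 1)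
    (hfe : ∀ s : ℂ, 0 < s.re → φ (N * s) = Φ (φ s))
    (hinj : ∀ s s' : ℂ, 0 < s.re → 0 < s'.re → φ s = φ s' → s.re = s'.re)
    (hlim : ∀ ε > 0, ∃ ρ > 0, ∀ s : ℂ, 0 < s.re → s.re < ρ → |s.im| < ρ → ‖φ s‖ < ε) : l = 1 := by
  obtain ⟨h, hh, hhe⟩ := holo_log (hp_convex 0) (hp_open 0) (hp_ne 0) hd h0
  have hre : ∀ (j : ℕ) (s : ℂ), ((N : ℂ) ^ j * s).re = N ^ j * s.re := fun j s => by
    rw [← Complex.ofReal_pow, Complex.re_ofReal_mul]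
  have hN0 : 0 < N := by linarith
  have hiter : ∀ (j : ℕ) (s : ℂ), 0 < s.re → φ ((N : ℂ) ^ j * s) = Φ^[j] (φ s) := by
    intro j
    induction j with
    | zero => intro s _; simp
    | succ j ih =>
      intro s hs
      rw [Function.iterate_succ_apply', ← ih s hs, ← hfe _ (by rw [hre]; positivity)]
      congr 1; ring
  -- ratio control
  have hratio : ∀ j : ℕ, ∀ ε > 0, ∃ r > 0, ∀ z : ℂ, z ≠ 0 → ‖z‖ < r → ‖Φ^[j] z / z - l ^ j‖ < ε := by
    intro j ε hε
    have h1 : HasDerivAt (Φ^[j]) (l ^ j) 0 := HasDerivAt.iterate 0 hΦ hΦ0 j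
    have h2 := h1.tendsto_slope_zero
    have hz0 : Φ^[j] 0 = 0 := Function.iterate_fixed hΦ0 j
    have h3 := Metric.tendsto_nhdsWithin_nhds.1 h2 ε hε
    obtain ⟨r, hr, h4⟩ := h3
    refine ⟨r, hr, fun z hz hzr => ?_⟩
    have := h4 hz (by simpa using hzr)
    rw [dist_eq_norm] at this
    simpa [hz0, div_eq_inv_mul] using this
  have hsmall : ∀ η > 0, ∃ ρ > 0, ∀ x : ℝ, 0 < x → x < ρ → x * ‖deriv h x‖ ≤ η := by
    intro η hη
    -- log near one
    have hlog : Tendsto Complex.log (𝓝 1) (𝓝 0) := by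
      have := (continuousAt_clog (x := 1) (by simp)).tendsto
      simpa using this
    obtain ⟨κ, hκ, hκl⟩ := Metric.tendsto_nhds_nhds.1 hlog (η / 512) (by positivity)
    have hκ1 : 0 < min κ 1 := by positivity
    obtain ⟨j, hj, hjl⟩ := unit_rec hl (ε := min κ 1 / 2) (by positivity)
    obtain ⟨r, hr, hrr⟩ := hratio j (min κ 1 / 2) (by positivity)
    obtain ⟨ρ, hρ, hρφ⟩ := hlim r hr
    refine ⟨ρ / 2, by positivity, fun x hx hxρ => ?_⟩
    by_contra hcon
    push Not at hcon
    have hbsub : ball (x : ℂ) (x / 4) ⊆ {s : ℂ | 0 < s.re} := by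
      intro s hs
      rw [mem_ball, dist_eq_norm] at hs
      have := (Complex.abs_re_le_norm (s - x)).trans_lt hs
      rw [abs_lt] at this
      simp at this
      change 0 < s.re
      linarith
    have hbre : ∀ s ∈ ball (x : ℂ) (x / 4), 3 / 4 * x < s.re ∧ s.re < 5 / 4 * x ∧ |s.im| < x / 4 := by
      intro s hs
      rw [mem_ball, dist_eq_norm] at hs
      have h1 := (Complex.abs_re_le_norm (s - x)).trans_lt hs
      have h2 := (Complex.abs_im_le_norm (s - x)).trans_lt hs
      rw [abs_lt] at h1
      simp at h1 h2
      exact ⟨by linarith, by linarith, h2⟩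
    obtain ⟨s, hs, hsb⟩ := bloch (by positivity : 0 < x / 4) (hh.mono hbsub)
    obtain ⟨b1, b2, b3⟩ := hbre s hs
    have hs0 : 0 < s.re := hbsub hs
    have hφs : ‖φ s‖ < r := hρφ s hs0 (by linarith) (by linarith)
    have hr1 := hrr (φ s) (h0 s hs0) hφs
    have hr2 : ‖Φ^[j] (φ s) / φ s - 1‖ < min κ 1 := by
      have e : Φ^[j] (φ s) / φ s - 1 = (Φ^[j] (φ s) / φ s - l ^ j) + (l ^ j - 1) := by ring
      rw [e]
      refine (norm_add_le _ _).trans_lt ?_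
      linarith
    have hne : Φ^[j] (φ s) / φ s ≠ 0 := by
      intro h'
      rw [h'] at hr2
      simp at hr2
    have hτ := hκl (x := Φ^[j] (φ s) / φ s) (by rw [dist_eq_norm]; exact hr2.trans_le (min_le_left _ _))
    rw [dist_zero_right] at hτ
    have hmem : h s + Complex.log (Φ^[j] (φ s) / φ s) ∈ ball (h s) (x / 4 * ‖deriv h x‖ / 128) := by
      rw [mem_ball, dist_eq_norm, add_sub_cancel_left]
      linarith
    obtain ⟨s', hs', hse⟩ := hsb hmem
    have hs0' : 0 < s'.re := hbsub hs'
    have e1 : φ s' = φ ((N : ℂ) ^ j * s) := by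
      rw [hiter j s hs0, ← hhe s' hs0', hse, Complex.exp_add, hhe s hs0, Complex.exp_log hne]
      field_simp [h0 s hs0]
    have e2 := hinj _ _ hs0' (by rw [hre]; positivity) e1
    rw [hre] at e2
    obtain ⟨b1', b2', b3'⟩ := hbre s' hs'
    have : 2 ≤ N ^ j := by
      calc (2:ℝ) ≤ N := hN
        _ = N ^ 1 := (pow_one _).symm
        _ ≤ N ^ j := pow_le_pow_right₀ (by linarith) hj
    nlinarith
  have hdiff : Tendsto (fun x : ℝ => h (N * x) - h x) (𝓝[>] 0) (𝓝 0) := by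
    rw [Metric.tendsto_nhdsWithin_nhds]
    intro ε hε
    obtain ⟨ρ, hρ, hρ2⟩ := hsmall (ε / (2 * N)) (by positivity)
    refine ⟨ρ / (2 * N), by positivity, fun {x} hx hxr => ?_⟩
    have hx : 0 < x := hx
    rw [dist_zero_right, Real.norm_of_nonneg hx.le, lt_div_iff₀ (by positivity)] at hxr
    rw [dist_zero_right]
    have := (convex_Icc x (N * x)).norm_image_sub_le_of_norm_hasDerivWithin_le (𝕜 := ℝ)
      (f := fun y : ℝ => h y)
      (f' := fun y : ℝ => deriv h y) (C := ε / (2 * N) / x) (x := x) (y := N * x) ?_ ?_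
      ⟨le_rfl, by nlinarith⟩ ⟨by nlinarith, le_rfl⟩
    · push_cast at this
      refine this.trans_lt ?_
      rw [Real.norm_of_nonneg (by nlinarith)]
      have e : ε / (2 * N) / x * (N * x - x) = ε / 2 * ((N - 1) / N) := by field_simp
      rw [e]
      have : (N - 1) / N < 1 := by rw [div_lt_one hN0]; linarith
      nlinarith
    · intro t ht
      have ht0 : 0 < t := hx.trans_le ht.1
      have hd : HasDerivAt h (deriv h t) (t : ℂ) :=
        (hh.differentiableAt ((hp_open 0).mem_nhds (by simpa using ht0))).hasDerivAt
      exact hd.comp_ofReal.hasDerivWithinAt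
    · intro t ht
      have ht0 : 0 < t := hx.trans_le ht.1
      have h3 := hρ2 t ht0 (by have := ht.2; nlinarith)
      rw [le_div_iff₀ hx]
      have : x * ‖deriv h t‖ ≤ t * ‖deriv h t‖ := by gcongr; exact ht.1
      linarith
  have hexp : Tendsto (fun x : ℝ => Complex.exp (h (N * x) - h x)) (𝓝[>] 0) (𝓝 1) := by
    have := (Complex.continuous_exp.tendsto 0).comp hdiff
    simpa [Function.comp_def] using this
  have hexp2 : Tendsto (fun x : ℝ => Complex.exp (h (N * x) - h x)) (𝓝[>] 0) (𝓝 l) := by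
    rw [Metric.tendsto_nhdsWithin_nhds]
    intro ε hε
    obtain ⟨r, hr, hrr⟩ := hratio 1 ε hε
    obtain ⟨ρ, hρ, hρφ⟩ := hlim r hr
    refine ⟨ρ, hρ, fun {x} hx hxr => ?_⟩
    have hx : 0 < x := hx
    rw [dist_zero_right, Real.norm_of_nonneg hx.le] at hxr
    have hx' : 0 < (x : ℂ).re := by simpa using hx
    have := hrr (φ x) (h0 x hx') (hρφ x hx' (by simpa using hxr) (by simpa using hρ))
    rw [dist_eq_norm, Complex.exp_sub, hhe (x:ℂ) hx', hhe (N * x : ℂ) (by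
      have := hre 1 x; rw [pow_one, pow_one] at this; change 0 < (_ : ℂ).re; rw [this]; positivity), hfe _ hx']
    simpa using this
  exact (tendsto_nhds_unique hexp hexp2).symm

theorem per_of_exp {X : Set ℝ} {N : ℕ} (hN : 2 ≤ N) {δ : ℝ} (hδ : 0 < δ) (hX : ∀ x ∈ X, N * x ∈ X)
    (hA : ∀ x ∈ X, ∀ y ∈ X, ∀ m : ℤ, |N * x - N * y - 2 * Real.pi * m| < δ → ∃ m' : ℤ, m = N * m')
    {x : ℝ} (hx : x ∈ X) : ∃ q : ℕ, 0 < q ∧ ∃ m : ℤ, (N : ℝ) ^ q * x = x + 2 * Real.pi * m := by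
  have hN0 : (0 : ℝ) < N := by positivity
  have hN1 : (2 : ℝ) ≤ N := by exact_mod_cast hN
  have hXp : ∀ (i : ℕ), ∀ x ∈ X, (N : ℝ) ^ i * x ∈ X := by
    intro i x hx
    induction i with
    | zero => simpa using hx
    | succ i ih => rw [pow_succ', mul_assoc]; exact hX _ ih
  have desc : ∀ i : ℕ, ∀ x ∈ X, ∀ y ∈ X, ∀ δ' ≤ δ, 0 < δ' → ∀ m : ℤ,
      |(N : ℝ) ^ i * x - (N : ℝ) ^ i * y - 2 * Real.pi * m| < δ' →
      ∃ m' : ℤ, |x - y - 2 * Real.pi * m'| < δ' / N ^ i := by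
    intro i x hx y hy
    induction i with
    | zero => intro δ' _ _ m hm; exact ⟨m, by simpa using hm⟩
    | succ i ih =>
      intro δ' hδ' h0 m hm
      obtain ⟨m', rfl⟩ := hA _ (hXp i x hx) _ (hXp i y hy) m (by
        rw [← mul_assoc, ← mul_assoc, ← pow_succ']; linarith)
      have e : (N : ℝ) ^ (i + 1) * x - (N : ℝ) ^ (i + 1) * y - 2 * Real.pi * (((N : ℤ) * m' : ℤ) : ℝ) =
          N * ((N : ℝ) ^ i * x - (N : ℝ) ^ i * y - 2 * Real.pi * m') := by push_cast; ring
      rw [e, abs_mul, abs_of_pos hN0] at hm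
      obtain ⟨m'', hm''⟩ := ih (δ' / N) ((div_le_self h0.le (by linarith)).trans hδ') (by positivity) m'
        (by rw [lt_div_iff₀ hN0]; linarith)
      refine ⟨m'', hm''.trans_le (le_of_eq ?_)⟩
      rw [pow_succ]; field_simp
  have hpi := Real.pi_pos
  obtain ⟨M, hM⟩ := exists_nat_gt (2 * Real.pi / δ)
  have hM0 : (0:ℝ) < M := lt_trans (by positivity) hM
  have hM0' : 0 < M := by exact_mod_cast hM0
  have key : ∀ I : ℕ, ∃ q ∈ Icc 1 M, ∃ m : ℤ, |(N : ℝ) ^ q * x - x - 2 * Real.pi * m| < δ / N ^ I := by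
    intro I
    let v : ℕ → ℝ := fun l => (N : ℝ) ^ (I + l) * x / (2 * Real.pi)
    have hmaps : ∀ l ∈ Finset.range (M + 1), ⌊M * Int.fract (v l)⌋ ∈ Finset.Ico (0:ℤ) M := by
      intro l _
      rw [Finset.mem_Ico, Int.le_floor, Int.floor_lt]
      refine ⟨?_, ?_⟩
      · push_cast; exact mul_nonneg hM0.le (Int.fract_nonneg _)
      · push_cast; nlinarith [Int.fract_lt_one (v l)]
    obtain ⟨a, ha, b, hb, hab, he⟩ := Finset.exists_ne_map_eq_of_card_lt_of_maps_to (by simp) hmaps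
    have hcl : ∀ a b : ℕ, a < b → b ≤ M → ⌊M * Int.fract (v a)⌋ = ⌊M * Int.fract (v b)⌋ →
        ∃ q ∈ Icc 1 M, ∃ m : ℤ, |(N : ℝ) ^ q * x - x - 2 * Real.pi * m| < δ / N ^ I := by
      intro a b hab hb he
      have h1 := Int.abs_sub_lt_one_of_floor_eq_floor he
      rw [← mul_sub, abs_mul, abs_of_pos hM0] at h1
      have e : Int.fract (v a) - Int.fract (v b) = v a - v b - ((⌊v a⌋ - ⌊v b⌋ : ℤ) : ℝ) := by
        unfold Int.fract; push_cast; ring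
      have e2 : (N : ℝ) ^ (I + a) * (N ^ (b - a) * x) - N ^ (I + a) * x - 2 * Real.pi * ((⌊v b⌋ - ⌊v a⌋ : ℤ) : ℝ) =
          - (2 * Real.pi * (Int.fract (v a) - Int.fract (v b))) := by
        have : (N : ℝ) ^ (I + a) * (N ^ (b - a) * x) = N ^ (I + b) * x := by
          rw [← mul_assoc, ← pow_add]; congr 2; omega
        rw [this, e]
        simp only [v]
        push_cast
        field_simp
        ring
      obtain ⟨m', hm'⟩ := desc (I + a) _ (hXp (b - a) x hx) x hx δ le_rfl hδ (⌊v b⌋ - ⌊v a⌋) (by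
        rw [e2, abs_neg, abs_mul, abs_of_pos (by positivity)]
        rw [div_lt_iff₀ hδ] at hM
        nlinarith [abs_nonneg (Int.fract (v a) - Int.fract (v b))])
      refine ⟨b - a, ⟨by omega, by omega⟩, m', hm'.trans_le ?_⟩
      gcongr
      · linarith
      · omega
    rw [Finset.mem_range] at ha hb
    rcases lt_or_gt_of_ne hab with h | h
    · exact hcl a b h (by omega) he
    · exact hcl b a h (by omega) he.symm
  by_contra hcon
  push Not at hcon
  have hμ : ∀ q : ℕ, 0 < q → ∃ μ > 0, ∀ m : ℤ, μ ≤ |(N : ℝ) ^ q * x - x - 2 * Real.pi * m| := by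
    intro q hq
    set w := ((N : ℝ) ^ q * x - x) / (2 * Real.pi) with hw
    have e : ∀ m : ℤ, |(N : ℝ) ^ q * x - x - 2 * Real.pi * m| = 2 * Real.pi * |w - m| := by
      intro m
      rw [← abs_of_pos (show (0:ℝ) < 2 * Real.pi by positivity), ← abs_mul, abs_of_pos (show (0:ℝ) < 2 * Real.pi by positivity)]
      congr 1; rw [hw]; field_simp
    refine ⟨2 * Real.pi * |w - round w|, ?_, fun m => ?_⟩
    · rw [← e]
      refine abs_pos.2 fun h => hcon q hq (round w) (by linarith)
    · rw [e]; exact mul_le_mul_of_nonneg_left (round_le w m) (by positivity)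
  have hT : Tendsto (fun I : ℕ => δ / (N : ℝ) ^ I) atTop (𝓝 0) :=
    tendsto_const_nhds.div_atTop (tendsto_pow_atTop_atTop_of_one_lt (by linarith))
  have hall : ∀ᶠ I : ℕ in atTop, ∀ q ∈ Icc 1 M, ∀ m : ℤ, δ / (N : ℝ) ^ I < |(N : ℝ) ^ q * x - x - 2 * Real.pi * m| := by
    refine (eventually_all_finite (finite_Icc 1 M)).2 fun q hq => ?_
    obtain ⟨μ, hμ0, hμm⟩ := hμ q hq.1
    filter_upwards [hT.eventually_lt_const hμ0] with I hI m
    exact hI.trans_le (hμm m)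
  obtain ⟨I, hI⟩ := hall.exists
  obtain ⟨q, hq, m, hm⟩ := key I
  exact lt_asymm hm (hI q hq m)

def Lands (ψ : ℂ → ℂ) (p : ℂ) (θ : ℝ) : Prop :=
  ∀ ε > 0, ∃ ρ > 0, ∀ s : ℂ, 0 < s.re → s.re < ρ → |s.im - θ| < ρ → ‖ψ s - p‖ < ε

theorem Bott.lands_exists {c p : ℂ} {ψ : ℂ → ℂ} (h : Bott c ψ) [LocallyConnectedSpace (juliaQuad c)]
    (hp : p ∈ juliaQuad c) : ∃ θ, Lands ψ p θ := by
  have hpi := Real.pi_pos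
  have hpc : p ∈ closure (filledJuliaQuad c)ᶜ := by
    have := hp
    rw [juliaQuad, frontier_eq_closure_inter_closure] at this
    exact this.2
  obtain ⟨v, hv, hvp⟩ := mem_closure_iff_seq_limit.1 hpc
  have hsurj : ∀ k, ∃ s : ℂ, 0 < s.re ∧ ψ s = v k ∧ s.im ∈ Icc 0 (2 * Real.pi) := by
    intro k
    obtain ⟨s, hs, hse⟩ := h.surj (hv k)
    have e : (s + 2 * Real.pi * Complex.I * ((-⌊s.im / (2 * Real.pi)⌋ : ℤ) : ℂ)).im =
        s.im - 2 * Real.pi * ⌊s.im / (2 * Real.pi)⌋ := by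
      have : s + 2 * Real.pi * Complex.I * ((-⌊s.im / (2 * Real.pi)⌋ : ℤ) : ℂ) =
        s + ((-(2 * Real.pi * ⌊s.im / (2 * Real.pi)⌋) : ℝ) : ℂ) * Complex.I := by push_cast; ring
      rw [this]; simp; ring
    refine ⟨s + 2 * Real.pi * Complex.I * ((-⌊s.im / (2 * Real.pi)⌋ : ℤ) : ℂ), ?_, ?_, ?_⟩
    · simpa using hs
    · rw [neg_per h.neg _ s hs, hse]
    · rw [e]
      have h1 := Int.floor_le (s.im / (2 * Real.pi))
      have h2 := Int.lt_floor_add_one (s.im / (2 * Real.pi))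
      rw [le_div_iff₀ (by positivity)] at h1
      rw [div_lt_iff₀ (by positivity)] at h2
      constructor <;> linarith
  choose s hs0 hse hsi using hsurj
  obtain ⟨A, hA⟩ := h.far (‖c‖ + 3)
  have hbd : ∀ᶠ k in atTop, s k ∈ Icc 0 A ×ℂ Icc 0 (2 * Real.pi) := by
    have h1 : ∀ᶠ k in atTop, ‖v k‖ < ‖c‖ + 3 :=
      (hvp.norm).eventually_lt_const (K_lt (J_sub_K c hp))
    filter_upwards [h1] with k hk
    refine ⟨⟨(hs0 k).le, ?_⟩, hsi k⟩
    by_contra hcon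
    have := hA (s k) (not_le.1 hcon)
    rw [hse] at this
    linarith
  obtain ⟨t, ht, φ, hφ, hlim⟩ := (isCompact_Icc.reProdIm isCompact_Icc).tendsto_subseq' hbd.frequently
  have hvφ : Tendsto (fun k => ψ (s (φ k))) atTop (𝓝 p) := by
    refine (hvp.comp hφ.tendsto_atTop).congr fun k => ?_
    exact (hse _).symm
  have ht0 : t.re = 0 := by
    by_contra hne
    have hpos : 0 < t.re := lt_of_le_of_ne ht.1.1 (Ne.symm hne)
    have hc : ContinuousAt ψ t := h.diff.continuousOn.continuousAt ((hp_open 0).mem_nhds hpos)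
    have : p = ψ t := tendsto_nhds_unique hvφ (hc.tendsto.comp hlim)
    exact h.omega hpos (this ▸ J_sub_K c hp)
  refine ⟨t.im, fun ε hε => ?_⟩
  obtain ⟨ρ, hρ, hU⟩ := h.UC (ε := ε / 2) (by linarith)
  refine ⟨ρ / 2, by linarith, fun w hw0 hw1 hw2 => ?_⟩
  have hlr : Tendsto (fun k => (s (φ k)).re) atTop (𝓝 0) := by
    rw [← ht0]; exact (Complex.continuous_re.tendsto t).comp hlim
  have hli : Tendsto (fun k => |t.im - (s (φ k)).im|) atTop (𝓝 0) := by
    have : Tendsto (fun k => (s (φ k)).im) atTop (𝓝 t.im) := (Complex.continuous_im.tendsto t).comp hlim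
    simpa using (this.const_sub t.im).abs
  have hle : ‖ψ w - p‖ ≤ ε / 2 := by
    refine le_of_tendsto (hvφ.const_sub (ψ w)).norm ?_
    filter_upwards [hlr.eventually_lt_const hρ, hli.eventually_lt_const (half_pos hρ)] with k h1 h2
    refine (hU w (s (φ k)) hw0 (by linarith) (hs0 _) h1 ?_).le
    have := abs_sub_le w.im t.im (s (φ k)).im
    linarith
  linarith

theorem Bott.lands_unif {c p : ℂ} {ψ : ℂ → ℂ} (h : Bott c ψ) [LocallyConnectedSpace (juliaQuad c)]
    {ε : ℝ} (hε : 0 < ε) : ∃ ρ > 0, ∀ θ, Lands ψ p θ → ∀ s : ℂ, 0 < s.re → s.re < ρ → |s.im - θ| < ρ →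
      ‖ψ s - p‖ < ε := by
  obtain ⟨ρ, hρ, hU⟩ := h.UC (ε := ε / 2) (by linarith)
  refine ⟨ρ, hρ, fun θ hθ s h0 h1 h2 => ?_⟩
  obtain ⟨ρ', hρ', hL⟩ := hθ (ε / 2) (by linarith)
  have hm : 0 < min ρ ρ' / 2 := by positivity
  have a1 : min ρ ρ' / 2 < ρ := by linarith [min_le_left ρ ρ']
  have a2 : min ρ ρ' / 2 < ρ' := by linarith [min_le_right ρ ρ']
  have b1 := hL (((min ρ ρ' / 2 : ℝ) : ℂ) + θ * Complex.I) (by simpa using hm) (by simpa using a2) (by simpa using hρ')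
  have b2 := hU s (((min ρ ρ' / 2 : ℝ) : ℂ) + θ * Complex.I) h0 h1 (by simpa using hm) (by simpa using a1) (by simpa using h2)
  have := norm_sub_le_norm_sub_add_norm_sub (ψ s) (ψ (((min ρ ρ' / 2 : ℝ) : ℂ) + θ * Complex.I)) p
  linarith

theorem Bott.lands_mul {c p : ℂ} {ψ : ℂ → ℂ} (h : Bott c ψ) {n : ℕ} (hper : (quadMap c)^[n] p = p) {θ : ℝ}
    (hθ : Lands ψ p θ) : Lands ψ p (2 ^ n * θ) := by
  intro ε hε
  have hcont : Continuous ((quadMap c)^[n]) := (qm_cont c).iterate n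
  obtain ⟨r, hr, hrF⟩ := Metric.continuous_iff.1 hcont p ε hε
  obtain ⟨ρ, hρ, hL⟩ := hθ r hr
  have h2 : (0:ℝ) < 2 ^ n := by positivity
  refine ⟨2 ^ n * ρ, by positivity, fun s h0 h1 h3 => ?_⟩
  have e : s = 2 ^ n * (((2:ℝ) ^ n)⁻¹ * s : ℂ) := by push_cast; field_simp
  set w : ℂ := ((2:ℝ) ^ n)⁻¹ * s with hw
  have hre : s.re = 2 ^ n * w.re := by rw [e]; exact pow_re n w
  have him : s.im = 2 ^ n * w.im := by
    conv_lhs => rw [e]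
    have : (2:ℂ) ^ n = ((2 ^ n : ℝ) : ℂ) := by push_cast; rfl
    rw [this, Complex.im_ofReal_mul]
  have hw0 : 0 < w.re := by rw [hre] at h0; exact pos_of_mul_pos_right h0 h2.le
  have hw1 : w.re < ρ := by rw [hre] at h1; exact lt_of_mul_lt_mul_left h1 h2.le
  have hw2 : |w.im - θ| < ρ := by
    rw [him, ← mul_sub, abs_mul, abs_of_pos h2] at h3; exact lt_of_mul_lt_mul_left h3 h2.le
  have := hrF (ψ w) (by rw [dist_eq_norm]; exact hL w hw0 hw1 hw2)
  rw [hper, bott_iter le_rfl h.feq n w hw0, ← e, dist_eq_norm] at this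
  exact this

theorem Bott.lemA {c p : ℂ} {ψ : ℂ → ℂ} (h : Bott c ψ) [LocallyConnectedSpace (juliaQuad c)] {n : ℕ}
    (hd : deriv ((quadMap c)^[n]) p ≠ 0) :
    ∃ δ > 0, ∀ x, Lands ψ p x → ∀ y, Lands ψ p y → ∀ m : ℤ,
      |((2 ^ n : ℕ) : ℝ) * x - ((2 ^ n : ℕ) : ℝ) * y - 2 * Real.pi * m| < δ →
      ∃ m' : ℤ, m = ((2 ^ n : ℕ) : ℤ) * m' := by
  have hdf : Differentiable ℂ ((quadMap c)^[n]) := (qm_diff c).iterate n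
  have hs : HasStrictDerivAt ((quadMap c)^[n]) (deriv ((quadMap c)^[n]) p) p :=
    (hdf.analyticAt p).hasStrictDerivAt
  obtain ⟨r, hr, hinv⟩ := Metric.eventually_nhds_iff.1 (hs.eventually_left_inverse hd)
  obtain ⟨ρ, hρ, hL⟩ := h.lands_unif (p := p) hr
  have h2 : (0:ℝ) < 2 ^ n := by positivity
  refine ⟨ρ, hρ, fun x hx y hy m hm => ?_⟩
  push_cast at hm
  set y' : ℝ := x - 2 * Real.pi * m / 2 ^ n with hy'
  have e1 : |y' - y| < ρ := by
    have : (2:ℝ) ^ n * x - 2 ^ n * y - 2 * Real.pi * m = 2 ^ n * (y' - y) := by rw [hy']; field_simp; ring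
    rw [this, abs_mul, abs_of_pos h2] at hm
    have h1 : (1:ℝ) ≤ 2 ^ n := one_le_pow₀ (by norm_num)
    nlinarith [abs_nonneg (y' - y)]
  set t : ℝ := ρ / 2
  have ht : 0 < t := by positivity
  have htρ : t < ρ := half_lt_self hρ
  have r1 : ‖ψ (t + x * Complex.I) - p‖ < r := hL x hx _ (by simpa using ht) (by simpa using htρ) (by simpa using hρ)
  have r2 : ‖ψ (t + y' * Complex.I) - p‖ < r := hL y hy _ (by simpa using ht) (by simpa using htρ) (by simpa using e1)
  have hF : (quadMap c)^[n] (ψ (t + x * Complex.I)) = (quadMap c)^[n] (ψ (t + y' * Complex.I)) := by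
    rw [bott_iter le_rfl h.feq n _ (by simpa using ht), bott_iter le_rfl h.feq n _ (by simpa using ht)]
    have := neg_per h.neg m (2 ^ n * (t + y' * Complex.I)) (by rw [pow_re]; simpa using ht)
    rw [← this]
    congr 1
    rw [hy']; push_cast; field_simp; ring
  have heq : ψ (t + x * Complex.I) = ψ (t + y' * Complex.I) := by
    rw [← hinv (y := ψ (t + x * Complex.I)) (by rw [dist_eq_norm]; exact r1), hF,
      hinv (y := ψ (t + y' * Complex.I)) (by rw [dist_eq_norm]; exact r2)]
  obtain ⟨k, hk⟩ := h.inj _ _ (by simpa using ht) (by simpa using ht) heq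
  refine ⟨k, ?_⟩
  have him := congrArg Complex.im hk
  have e3 : (t : ℂ) + y' * Complex.I + 2 * Real.pi * Complex.I * k = t + ((y' + 2 * Real.pi * k : ℝ) : ℂ) * Complex.I := by
    push_cast; ring
  rw [e3] at him
  simp at him
  rw [hy'] at him
  have hpi := Real.pi_pos
  have : (m : ℝ) = 2 ^ n * k := by
    field_simp at him
    nlinarith
  push_cast
  exact_mod_cast this

theorem Bott.final {c p : ℂ} {ψ : ℂ → ℂ} (h : Bott c ψ) [LocallyConnectedSpace (juliaQuad c)] {n : ℕ}
    (hn : 0 < n) (hper : (quadMap c)^[n] p = p) (hp : p ∈ juliaQuad c)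
    (hind : ‖deriv ((quadMap c)^[n]) p‖ = 1) :
    ∃ q : ℕ, 0 < q ∧ deriv ((quadMap c)^[n]) p ^ q = 1 := by
  obtain ⟨θ, hθ⟩ := h.lands_exists hp
  obtain ⟨δ, hδ, hA⟩ := h.lemA (p := p) (n := n) (fun h0 => by rw [h0] at hind; simp at hind)
  obtain ⟨q, hq, m, hm⟩ := per_of_exp (X := {x | Lands ψ p x}) (N := 2 ^ n)
    (by calc 2 = 2 ^ 1 := rfl
          _ ≤ 2 ^ n := Nat.pow_le_pow_right (by norm_num) hn) hδ
    (fun x hx => by have := h.lands_mul hper hx; push_cast; exact this) hA hθ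
  refine ⟨q, hq, ?_⟩
  have hdF : HasDerivAt ((quadMap c)^[n]) (deriv ((quadMap c)^[n]) p) p :=
    (((qm_diff c).iterate n) p).hasDerivAt
  have hdFq := HasDerivAt.iterate p hdF hper q
  set F := ((quadMap c)^[n])^[q] with hFdef
  have hFp : F p = p := Function.iterate_fixed hper q
  have hpK := J_sub_K c hp
  have hshift : ∀ s : ℂ, 0 < s.re → 0 < (s + θ * Complex.I).re := fun s hs => by simpa using hs
  refine snail (φ := fun s => ψ (s + θ * Complex.I) - p) (Φ := fun z => F (p + z) - p)
    (N := 2 ^ (n * q)) ?_ ?_ ?_ ?_ ?_ ?_ ?_ ?_ ?_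
  · calc (2:ℝ) = 2 ^ 1 := (pow_one _).symm
      _ ≤ 2 ^ (n * q) := pow_le_pow_right₀ (by norm_num) (Nat.mul_pos hn hq)
  · refine DifferentiableOn.sub_const ?_ _
    exact h.diff.comp (f := fun s : ℂ => s + θ * Complex.I) (by fun_prop) hshift
  · intro s hs h0
    exact h.omega (hshift s hs) (by rw [sub_eq_zero.1 h0]; exact hpK)
  · simp [hFp]
  · have h1 : HasDerivAt F (deriv ((quadMap c)^[n]) p ^ q) (p + 0) := by rw [add_zero]; exact hdFq
    exact (h1.comp_const_add p 0).sub_const p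
  · rw [norm_pow, hind, one_pow]
  · intro s hs
    simp only [add_sub_cancel, sub_left_inj]
    rw [hFdef, ← Function.iterate_mul, bott_iter le_rfl h.feq _ _ (hshift s hs),
      ← neg_per h.neg m _ (hshift _ (by
        have := pow_re (n * q) s
        push_cast
        rw [this]; positivity))]
    congr 1
    have : ((2:ℂ) ^ n) ^ q * θ = θ + 2 * Real.pi * m := by
      exact_mod_cast congrArg (fun x : ℝ => (x : ℂ)) hm
    push_cast
    rw [pow_mul]
    linear_combination -Complex.I * this
  · intro s s' hs hs' he
    have := h.re_eq (hshift s hs) (hshift s' hs') (sub_left_inj.1 he)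
    simpa using this
  · intro ε hε
    obtain ⟨ρ, hρ, hL⟩ := hθ ε hε
    refine ⟨ρ, hρ, fun s h0 h1 h2 => hL _ (hshift s h0) (by simpa using h1) (by simpa using h2)⟩

/-- If `z ↦ z² + c` has a Cremer periodic point (irrationally indifferent and not
holomorphically linearizable), then its Julia set is not locally connected. -/
theorem julia_not_locallyConnected_of_cremer (c p : ℂ) (n : ℕ) (hn : 0 < n)
    (hper : (quadMap c)^[n] p = p)
    (hind : ‖deriv ((quadMap c)^[n]) p‖ = 1)
    (hirr : ∀ m : ℕ, 0 < m → deriv ((quadMap c)^[n]) p ^ m ≠ 1)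
    (hnonlin : ¬ ∃ (r : ℝ) (h : ℂ → ℂ), 0 < r ∧
        h 0 = p ∧ DifferentiableOn ℂ h (Metric.ball (0 : ℂ) r) ∧
        Set.InjOn h (Metric.ball (0 : ℂ) r) ∧
        ∀ w ∈ Metric.ball (0 : ℂ) r,
          ‖deriv ((quadMap c)^[n]) p * w‖ < r →
            (quadMap c)^[n] (h w) = h (deriv ((quadMap c)^[n]) p * w)) :
    ¬ LocallyConnectedSpace (juliaQuad c) := by
  intro hlc
  have hp := per_mem_J hn hper hind hnonlin
  by_cases hc : c ∈ filledJuliaQuad c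
  · obtain ⟨ψ, h⟩ := bott_exists hc
    obtain ⟨q, hq, hq1⟩ := h.final hn hper hp hind
    exact hirr q hq hq1
  · exact not_lc_of_c_not_mem hc ⟨p, hp⟩ hlc
end

section
/- For a polynomial f of degree d ≥ 2, every attracting cycle attracts at least one critical point of f; hence f has at most d − 1 attracting cycles in ℂ. -/
open Filter

/-- The forward orbit of a periodic point, i.e. the cycle it generates. -/
def cycleOf (f : ℂ → ℂ) (p : ℂ) : Set ℂ := {w : ℂ | ∃ k : ℕ, w = f^[k] p}

/-- The collection of attracting cycles of `f`. -/
def attractingCycles (f : ℂ → ℂ) : Set (Set ℂ) :=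
  {C : Set ℂ | ∃ (p : ℂ) (n : ℕ), 0 < n ∧ f^[n] p = p ∧
    ‖deriv (f^[n]) p‖ < 1 ∧ C = cycleOf f p}

lemma aux_section (P : Polynomial ℂ) (p : ℂ) (r : ℝ) (hr : 0 < r) (hp : P.eval p = p)
    (hP : ∀ z, P.eval z ∈ Metric.ball p r → P.derivative.eval z ≠ 0) :
    ∃ g : ℂ → ℂ, g p = p ∧ DifferentiableOn ℂ g (Metric.ball p r) ∧
      HasDerivAt g (P.derivative.eval p)⁻¹ p ∧
      ∀ u ∈ Metric.ball p r, P.eval (g u) = u := by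
  have hpb : p ∈ Metric.ball p r := Metric.mem_ball_self hr
  have : ContractibleSpace (Metric.ball p r) :=
    (convex_ball p r).contractibleSpace ⟨p, hpb⟩
  have : LocallyPathConnectedSpace (Metric.ball p r) :=
    Metric.isOpen_ball.locallyPathConnectedSpace
  obtain ⟨G, ⟨hG1, hG2⟩, -⟩ := P.isCoveringMapOn_eval.existsUnique_continuousMap_lifts
    (A := Metric.ball p r) ⟨Subtype.val, continuous_subtype_val⟩ (a₀ := ⟨p, hpb⟩) (e₀ := p) hp
    (by
      rintro ⟨a, ha⟩ ⟨z, hz, hza⟩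
      simp only [ContinuousMap.coe_mk] at hza
      exact hP z (by rw [hza]; exact ha) hz)
  classical
  let g : ℂ → ℂ := fun u => if h : u ∈ Metric.ball p r then G ⟨u, h⟩ else 0
  have hg : ∀ u (h : u ∈ Metric.ball p r), g u = G ⟨u, h⟩ := fun u h => dif_pos h
  have hPg : ∀ u ∈ Metric.ball p r, P.eval (g u) = u := by
    intro u hu
    rw [hg u hu]
    exact congrFun hG2 ⟨u, hu⟩
  have hgp : g p = p := by rw [hg p hpb]; exact hG1
  have hc : ContinuousOn g (Metric.ball p r) := by
    rw [continuousOn_iff_continuous_domRestrict]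
    convert G.continuous using 1
    ext ⟨u, hu⟩
    exact hg u hu
  have hd : ∀ u ∈ Metric.ball p r, HasDerivAt g (P.derivative.eval (g u))⁻¹ u := by
    intro u hu
    refine HasDerivAt.of_local_left_inverse
      (hc.continuousAt (Metric.isOpen_ball.mem_nhds hu)) (P.hasDerivAt (g u)) ?_ ?_
    · exact hP _ (by rw [hPg u hu]; exact hu)
    · filter_upwards [Metric.isOpen_ball.mem_nhds hu] with y hy using hPg y hy
  refine ⟨g, hgp, fun u hu => (hd u hu).differentiableAt.differentiableWithinAt, ?_, hPg⟩
  have := hd p hpb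
  rwa [hgp] at this

lemma aux_iter_deriv (f : Polynomial ℂ) (k : ℕ) (z : ℂ)
    (h : (f.comp^[k] Polynomial.X).derivative.eval z = 0) :
    ∃ j, f.derivative.eval ((fun w => f.eval w)^[j] z) = 0 := by
  induction k with
  | zero => simp at h
  | succ k ih =>
    rw [Function.iterate_succ_apply', Polynomial.derivative_comp, Polynomial.eval_mul,
      Polynomial.eval_comp, Polynomial.iterate_comp_eval, Polynomial.eval_X, mul_eq_zero] at h
    rcases h with h | h
    · exact ih h
    · exact ⟨k, h⟩

lemma aux_escape (f : Polynomial ℂ) (hd : 2 ≤ f.natDegree) :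
    ∃ R : ℝ, ∀ z : ℂ, R ≤ ‖z‖ → ‖z‖ ≤ ‖f.eval z‖ := by
  have hq : 0 < f.divX.degree := by
    rw [← Polynomial.natDegree_pos_iff_degree_pos, Polynomial.natDegree_divX_eq_natDegree_tsub_one]
    omega
  have ht := f.divX.tendsto_norm_atTop hq (tendsto_norm_cocompact_atTop (E := ℂ))
  have h2 : ∀ᶠ z : ℂ in cocompact ℂ, 2 ≤ ‖f.divX.eval z‖ ∧ ‖f.coeff 0‖ ≤ ‖z‖ :=
    (ht.eventually_ge_atTop 2).and ((tendsto_norm_cocompact_atTop (E := ℂ)).eventually_ge_atTop _)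
  rw [← Metric.cobounded_eq_cocompact, ← comap_norm_atTop, eventually_comap, eventually_atTop] at h2
  obtain ⟨R, hR⟩ := h2
  refine ⟨R, fun z hz => ?_⟩
  obtain ⟨h3, h4⟩ := hR _ hz z rfl
  have e : f.eval z = f.divX.eval z * z + f.coeff 0 := by
    conv_lhs => rw [← f.divX_mul_X_add]
    simp
  have h5 : ‖f.divX.eval z * z‖ ≤ ‖f.eval z‖ + ‖f.coeff 0‖ := by
    have : f.divX.eval z * z = f.eval z - f.coeff 0 := by rw [e]; ring
    rw [this]; exact norm_sub_le _ _
  rw [norm_mul] at h5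
  nlinarith [norm_nonneg z]

lemma aux_basin (F : ℂ → ℂ) (p l : ℂ) (hF : HasDerivAt F l p) (hp : F p = p) (hl : ‖l‖ < 1) :
    ∃ r > 0, ∀ z ∈ Metric.ball p r, Tendsto (fun m => F^[m] z) atTop (nhds p) := by
  obtain ⟨c, hc1, hc2⟩ := exists_between hl
  have hc0 : 0 ≤ c := (norm_nonneg l).trans hc1.le
  have h1 := (hasDerivAt_iff_isLittleO.1 hF).bound (sub_pos.2 hc1)
  obtain ⟨r, hr, h⟩ := Metric.eventually_nhds_iff_ball.1 h1
  have hstep : ∀ z ∈ Metric.ball p r, ‖F z - p‖ ≤ c * ‖z - p‖ := by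
    intro z hz
    have h2 := h z hz
    rw [hp] at h2
    have h3 : F z - p = (F z - p - (z - p) • l) + (z - p) • l := by ring
    rw [h3]
    refine (norm_add_le _ _).trans ?_
    rw [norm_smul]
    linarith
  refine ⟨r, hr, fun z hz => ?_⟩
  have hk : ∀ m, ‖F^[m] z - p‖ ≤ c ^ m * ‖z - p‖ := by
    intro m
    induction m with
    | zero => simp
    | succ m ih =>
      have hm : F^[m] z ∈ Metric.ball p r := by
        rw [mem_ball_iff_norm] at hz ⊢
        refine (ih.trans ?_).trans_lt hz
        exact mul_le_of_le_one_left (norm_nonneg _) (pow_le_one₀ hc0 hc2.le)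
      rw [Function.iterate_succ_apply']
      refine (hstep _ hm).trans ?_
      rw [pow_succ', mul_assoc]
      exact mul_le_mul_of_nonneg_left ih hc0
  rw [tendsto_iff_norm_sub_tendsto_zero]
  refine squeeze_zero (fun _ => norm_nonneg _) hk ?_
  simpa using (tendsto_pow_atTop_nhds_zero_of_lt_one hc0 hc2).mul_const ‖z - p‖

lemma aux_att (F : ℂ → ℂ) (hF : Continuous F) (p : ℂ) (n : ℕ) (hn : 0 < n) (z : ℂ)
    (h : Tendsto (fun m => (F^[n])^[m] z) atTop (nhds p)) :
    Tendsto (fun m : ℕ => Metric.infDist (F^[m] z) (cycleOf F p)) atTop (nhds 0) := by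
  rw [Metric.tendsto_atTop']
  intro ε hε
  have h1 : ∀ j ∈ Finset.range n, ∀ᶠ m in atTop,
      Metric.infDist (F^[j] ((F^[n])^[m] z)) (cycleOf F p) < ε := by
    intro j _
    have h2 : Tendsto (fun m => F^[j] ((F^[n])^[m] z)) atTop (nhds (F^[j] p)) :=
      ((hF.iterate j).tendsto p).comp h
    filter_upwards [Metric.tendsto_nhds.1 h2 ε hε] with m hm
    have hmem : F^[j] p ∈ cycleOf F p := ⟨j, rfl⟩
    exact (Metric.infDist_le_dist_of_mem hmem).trans_lt hm
  rw [← eventually_all_finset] at h1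
  have h3 := (Nat.tendsto_div_const_atTop hn.ne').eventually h1
  obtain ⟨N, hN⟩ := eventually_atTop.1 h3
  refine ⟨N, fun m hm => ?_⟩
  have h4 := hN m hm.le (m % n) (Finset.mem_range.2 (Nat.mod_lt _ hn))
  rw [← Function.iterate_mul, ← Function.iterate_add_apply, Nat.mod_add_div] at h4
  rw [Real.dist_eq, sub_zero, abs_of_nonneg Metric.infDist_nonneg]
  exact h4

lemma aux_shift (F : ℂ → ℂ) (C : Set ℂ) (k : ℕ) (z : ℂ) :
    Tendsto (fun m : ℕ => Metric.infDist (F^[m] (F^[k] z)) C) atTop (nhds 0) ↔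
    Tendsto (fun m : ℕ => Metric.infDist (F^[m] z) C) atTop (nhds 0) := by
  rw [← tendsto_add_atTop_iff_nat (f := fun m : ℕ => Metric.infDist (F^[m] z) C) k]
  simp only [Function.iterate_add_apply]

lemma aux_exists (f : Polynomial ℂ) (hd : 2 ≤ f.natDegree) (C : Set ℂ)
    (hC : C ∈ attractingCycles (fun z => f.eval z)) :
    ∃ z : ℂ, f.derivative.eval z = 0 ∧
        Tendsto (fun m : ℕ => Metric.infDist ((fun w => f.eval w)^[m] z) C)
          atTop (nhds 0) := by
  obtain ⟨p, n, hn, hp, hl, rfl⟩ := hC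
  by_contra hno
  push Not at hno
  set F : ℂ → ℂ := fun w => f.eval w with hFdef
  have hFc : Continuous F := f.continuous
  have hit : ∀ k z, (f.comp^[k] Polynomial.X).eval z = F^[k] z := by
    intro k z
    rw [Polynomial.iterate_comp_eval, Polynomial.eval_X]
  have hFn : HasDerivAt (F^[n]) (deriv (F^[n]) p) p := by
    have : Differentiable ℂ F := f.differentiable
    exact (this.iterate n p).hasDerivAt
  set l := deriv (F^[n]) p with hldef
  obtain ⟨r, hr, hb⟩ := aux_basin _ p l hFn hp hl
  have hcrit : ∀ k z, (f.comp^[k] Polynomial.X).eval z ∈ Metric.ball p r →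
      (f.comp^[k] Polynomial.X).derivative.eval z ≠ 0 := by
    intro k z hz h0
    obtain ⟨j, hj⟩ := aux_iter_deriv f k z h0
    refine hno _ hj ?_
    rw [hit] at hz
    have h1 := aux_att F hFc p n hn _ (hb _ hz)
    rw [aux_shift] at h1
    exact (aux_shift F _ j z).2 h1
  have hpk : ∀ k, F^[n * k] p = p := by
    intro k
    rw [Function.iterate_mul]
    exact Function.iterate_fixed hp k
  have hder : ∀ k, (f.comp^[n * k] Polynomial.X).derivative.eval p = l ^ k := by
    intro k
    have h1 := (f.comp^[n * k] Polynomial.X).hasDerivAt p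
    have h2 := hFn.iterate p hp k
    have h3 : (fun x => (f.comp^[n * k] Polynomial.X).eval x) = (F^[n])^[k] := by
      rw [← Function.iterate_mul]; ext z; exact hit _ z
    rw [h3] at h1
    exact h1.unique h2
  obtain ⟨R, hR⟩ := aux_escape f hd
  set M := max R (‖p‖ + r) with hM
  have hesc : ∀ k z, M ≤ ‖z‖ → ‖z‖ ≤ ‖F^[k] z‖ := by
    intro k z hz
    induction k with
    | zero => simp
    | succ k ih =>
      rw [Function.iterate_succ_apply']
      exact ih.trans (hR _ ((le_max_left _ _).trans (hz.trans ih)))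
  have hl0 : l ≠ 0 := by
    have := hcrit (n * 1) p (by rw [hit, hpk]; exact Metric.mem_ball_self hr)
    rw [hder] at this
    simpa using this
  have hbound : ∀ k : ℕ, (‖l‖⁻¹) ^ k ≤ M / (r / 2) := by
    intro k
    obtain ⟨g, hg1, hg2, hg3, hg4⟩ := aux_section (f.comp^[n * k] Polynomial.X) p r hr
      (by rw [hit, hpk]) (hcrit _)
    have h1 : ‖deriv g p‖ ≤ M / (r / 2) := by
      refine Complex.norm_deriv_le_of_forall_mem_sphere_norm_le (half_pos hr) ?_ ?_
      · refine (hg2.mono ?_).diffContOnCl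
        rw [closure_ball _ (half_pos hr).ne']
        exact Metric.closedBall_subset_ball (half_lt_self hr)
      · intro z hz
        have hzb : z ∈ Metric.ball p r := by
          rw [Metric.mem_sphere] at hz
          rw [Metric.mem_ball, hz]; linarith
        by_contra! hlt
        have h2 := hesc (n * k) (g z) hlt.le
        rw [← hit, hg4 z hzb] at h2
        have h3 : ‖z‖ ≤ ‖p‖ + r := by
          rw [mem_ball_iff_norm] at hzb
          have : z = p + (z - p) := by ring
          rw [this]
          exact (norm_add_le _ _).trans (by linarith)
        have := le_max_right R (‖p‖ + r)
        linarith
    rw [hg3.deriv, hder, norm_inv, norm_pow, ← inv_pow] at h1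
    exact h1
  obtain ⟨k, hk⟩ := pow_unbounded_of_one_lt (M / (r / 2))
    ((one_lt_inv₀ (norm_pos_iff.2 hl0)).2 hl)
  exact absurd (hbound k) (not_le.2 hk)

lemma aux_cycle_finite (F : ℂ → ℂ) (p : ℂ) (n : ℕ) (hn : 0 < n) (hp : F^[n] p = p) :
    (cycleOf F p).Finite := by
  refine ((Finset.range n).finite_toSet.image (fun k => F^[k] p)).subset ?_
  rintro w ⟨k, rfl⟩
  refine ⟨k % n, by simpa using Nat.mod_lt _ hn, ?_⟩
  exact Function.IsPeriodicPt.iterate_mod_apply hp k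

lemma aux_cycle_eq (F : ℂ → ℂ) (p : ℂ) (n : ℕ) (hn : 0 < n) (hp : F^[n] p = p) (w : ℂ)
    (hw : w ∈ cycleOf F p) : cycleOf F w = cycleOf F p := by
  obtain ⟨k, rfl⟩ := hw
  ext u
  constructor
  · rintro ⟨j, rfl⟩
    exact ⟨j + k, (Function.iterate_add_apply F j k p).symm⟩
  · rintro ⟨j, rfl⟩
    refine ⟨j + (n * k - k), ?_⟩
    rw [← Function.iterate_add_apply, add_assoc,
      Nat.sub_add_cancel (Nat.le_mul_of_pos_left k hn), Function.iterate_add_apply]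
    congr 1
    rw [Function.iterate_mul]
    exact (Function.iterate_fixed hp k).symm

lemma aux_inj (F : ℂ → ℂ) (C D : Set ℂ) (hC : C ∈ attractingCycles F)
    (hD : D ∈ attractingCycles F) (z : ℂ)
    (h1 : Tendsto (fun m : ℕ => Metric.infDist (F^[m] z) C) atTop (nhds 0))
    (h2 : Tendsto (fun m : ℕ => Metric.infDist (F^[m] z) D) atTop (nhds 0)) : C = D := by
  obtain ⟨p, n, hn, hp, -, rfl⟩ := hC
  obtain ⟨q, k, hk, hq, -, rfl⟩ := hD
  by_contra hne
  have hfC := aux_cycle_finite F p n hn hp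
  have hfD := aux_cycle_finite F q k hk hq
  have hdis : Disjoint (cycleOf F p) (cycleOf F q) := by
    rw [Set.disjoint_left]
    intro w hw hw'
    exact hne ((aux_cycle_eq F p n hn hp w hw).symm.trans (aux_cycle_eq F q k hk hq w hw'))
  have hnC : (cycleOf F p).Nonempty := ⟨p, 0, rfl⟩
  have hnD : (cycleOf F q).Nonempty := ⟨q, 0, rfl⟩
  obtain ⟨δ, hδ, hsep⟩ := Metric.exists_pos_forall_lt_edist hfC.isCompact hfD.isClosed hdis
  have hδ' : (0 : ℝ) < δ / 2 := by positivity
  obtain ⟨m, hm1, hm2⟩ := ((h1.eventually (gt_mem_nhds hδ')).and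
    (h2.eventually (gt_mem_nhds hδ'))).exists
  obtain ⟨a, ha, ha'⟩ := (Metric.infDist_lt_iff hnC).1 hm1
  obtain ⟨b, hb, hb'⟩ := (Metric.infDist_lt_iff hnD).1 hm2
  have h3 := hsep a ha b hb
  rw [edist_nndist, ENNReal.coe_lt_coe, ← NNReal.coe_lt_coe, coe_nndist] at h3
  have h4 := dist_triangle_left a b (F^[m] z)
  linarith

/-- Fatou–Julia: for a polynomial of degree `d ≥ 2`, every attracting cycle attracts
a critical point; hence there are at most `d − 1` attracting cycles. -/
theorem attracting_cycle_attracts_critical_point (f : Polynomial ℂ) (d : ℕ)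
    (hd : 2 ≤ d) (hdeg : f.natDegree = d) :
    (∀ C ∈ attractingCycles (fun z => f.eval z),
      ∃ z : ℂ, f.derivative.eval z = 0 ∧
        Tendsto (fun m : ℕ => Metric.infDist ((fun w => f.eval w)^[m] z) C)
          atTop (nhds 0)) ∧
    (attractingCycles (fun z => f.eval z)).Finite ∧
    (attractingCycles (fun z => f.eval z)).ncard ≤ d - 1 := by
  have hex := aux_exists f (hdeg ▸ hd)
  refine ⟨hex, ?_⟩
  choose! c hc1 hc2 using hex
  have hne : f.derivative ≠ 0 := by
    intro h
    have := Polynomial.derivative_eq_zero.1 h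
    omega
  have hmaps : ∀ C ∈ attractingCycles (fun z => f.eval z),
      c C ∈ (f.derivative.roots.toFinset : Set ℂ) := by
    intro C hC
    simp only [Finset.mem_coe, Multiset.mem_toFinset]
    exact (Polynomial.mem_roots hne).2 (hc1 C hC)
  have hinj : Set.InjOn c (attractingCycles (fun z => f.eval z)) := by
    intro C hC D hD h
    exact aux_inj _ C D hC hD (c C) (hc2 C hC) (h ▸ hc2 D hD)
  refine ⟨Set.Finite.of_injOn hmaps hinj (Finset.finite_toSet _), ?_⟩
  refine (Set.ncard_le_ncard_of_injOn c hmaps hinj (Finset.finite_toSet _)).trans ?_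
  rw [Set.ncard_coe_finset]
  refine (Multiset.toFinset_card_le _).trans ((Polynomial.card_roots' _).trans ?_)
  rw [← hdeg]
  exact Polynomial.natDegree_derivative_le f
end
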